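/- arXiv:2010.00952 — 6 statements merged into one kernel-verified Lean document; each statement's English description precedes it below -/
import Mathlib

section
/- Theorem 5, second part (linear convergence of the PDDY algorithm): Suppose F is μ_F-strongly convex and R is μ_R-strongly convex with μ_F + μ_R > 0, and H is differentiable with L_H-Lipschitz gradient for some L_H > 0. Let x* be the unique minimizer of Ψ and let u* = ∇H(Kx*) be the unique dual solution. Suppose γ_k ≡ γ ∈ (0, 2/L_F) and η ≥ ‖K‖². Then the PDDY algorithm converges linearly: there exists ρ ∈ (0,1] such that for every k ≥ 0, ‖x_R^{k+1} − x*‖² ≤ 4(1−ρ)^k · (‖x_R⁰ − x* + γK*(u⁰ − u*)‖² + γ²η‖u⁰ − u*‖² − γ²‖K*(u⁰ − u*)‖²). -/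
open Filter Topology RealInnerProductSpace

noncomputable section

/-- `p` is a minimizer of `y ↦ σ·G(y) + (1/2)‖y − z‖²`, i.e. `p = prox_{σG}(z)`
(the minimizer is unique when `G` is convex). -/
def IsProxPt {E : Type*} [NormedAddCommGroup E] [InnerProductSpace ℝ E]
    (σ : ℝ) (G : E → ℝ) (z p : E) : Prop :=
  ∀ y, σ * G p + ‖p - z‖ ^ 2 / 2 ≤ σ * G y + ‖y - z‖ ^ 2 / 2

/-- `u ∈ ∂G(z)`. -/
def IsSubgradientAt {E : Type*} [NormedAddCommGroup E] [InnerProductSpace ℝ E]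
    (G : E → ℝ) (z u : E) : Prop :=
  ∀ y, G z + ⟪u, y - z⟫ ≤ G y

open scoped InnerProduct

/-!
Write `a = x_R - x*` and `d = u - u*` for the errors of an iterate, `a'` and `d'` for those of the
next one, and `V = ‖a + γ K* d‖² + γ² (η ‖d‖² - ‖K* d‖²)`. Since `u'` is a gradient of `H`,
cocoercivity of `∇H` gives the dual step the strict gain
`‖x' - x*‖² + (1 + δ) γ² η ‖d'‖² ≤ V` with `δ = 2 / (1 + γ η L_H)`.
With `c` the difference of the images of `x'` and `x*` under the gradient step `id - γ ∇F`, strong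
monotonicity of `∂R` at the proximal step gives `V' + 2 γ μ_R ‖a'‖² ≤ ‖c‖² + γ² η ‖d'‖²`, while
`‖c‖² ≤ (1 - γ (2 - γ L_F) μ_F) ‖x' - x*‖²`. If `μ_F > 0` the last factor is strictly less than `1`;
if `μ_R > 0` the gain `‖a'‖²` controls `V'` up to `‖d'‖²`, which `δ` absorbs.
In both cases `V` contracts by a fixed factor, and `‖a'‖² ≤ 2 V`.
-/

section ConvexAnalysis

variable {E : Type*} [NormedAddCommGroup E] [InnerProductSpace ℝ E] {G : E → ℝ}

lemma le_of_forall_mem_Ioo_le_add_mul {A B C : ℝ}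
    (h : ∀ t ∈ Set.Ioo (0 : ℝ) 1, A ≤ B + t * C) : A ≤ B := by
  have hlim : Tendsto (fun t : ℝ => B + t * C) (𝓝[>] 0) (𝓝 B) := by
    have hcont : Continuous fun t : ℝ => B + t * C := by fun_prop
    simpa using (hcont.tendsto 0).mono_left nhdsWithin_le_nhds
  exact ge_of_tendsto hlim (Filter.mem_of_superset (Ioo_mem_nhdsGT one_pos) h)

lemma quadratic_growth_of_isMinOn {m : ℝ} {q : E} (hG : StrongConvexOn Set.univ m G)
    (hq : IsMinOn G Set.univ q) (y : E) : G q + m / 2 * ‖y - q‖ ^ 2 ≤ G y := by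
  refine le_of_forall_mem_Ioo_le_add_mul (C := m / 2 * ‖y - q‖ ^ 2) fun t ⟨ht0, ht1⟩ => ?_
  have hconv := hG.2 (Set.mem_univ q) (Set.mem_univ y) (sub_nonneg.2 ht1.le) ht0.le
    (sub_add_cancel 1 t)
  have hmin := isMinOn_univ_iff.1 hq ((1 - t) • q + t • y)
  simp only [smul_eq_mul, norm_sub_rev q y] at hconv
  refine le_of_mul_le_mul_left ?_ ht0
  linarith

namespace IsSubgradientAt

variable {μ : ℝ} {z z' r r' : E}

lemma add_sq_norm_sub_le (hr : IsSubgradientAt G z r) (hG : StrongConvexOn Set.univ μ G) (y : E) :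
    G z + ⟪r, y - z⟫ + μ / 2 * ‖y - z‖ ^ 2 ≤ G y := by
  have hconv : StrongConvexOn Set.univ μ fun w => G w - ⟪r, w⟫ := by
    rw [strongConvexOn_iff_convex] at hG ⊢
    refine (hG.sub ((innerSL ℝ r).toLinearMap.concaveOn convex_univ)).congr fun w _ => ?_
    simp [sub_right_comm]
  have hmin : IsMinOn (fun w => G w - ⟪r, w⟫) Set.univ z := isMinOn_univ_iff.2 fun w => by
    have := hr w
    rw [inner_sub_right] at this
    linarith
  have := quadratic_growth_of_isMinOn hconv hmin y
  rw [inner_sub_right]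
  linarith

lemma strongly_monotone (hr : IsSubgradientAt G z r) (hr' : IsSubgradientAt G z' r')
    (hG : StrongConvexOn Set.univ μ G) : μ * ‖z - z'‖ ^ 2 ≤ ⟪z - z', r - r'⟫ := by
  have h := hr.add_sq_norm_sub_le hG z'
  have h' := hr'.add_sq_norm_sub_le hG z
  have hinner : ⟪z - z', r - r'⟫ = -⟪r, z' - z⟫ - ⟪r', z - z'⟫ := by
    rw [real_inner_comm, inner_sub_left, ← neg_sub z z', inner_neg_right, neg_neg]
  rw [norm_sub_rev z' z] at h
  linarith

end IsSubgradientAt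

namespace IsProxPt

variable {σ : ℝ} {z p : E}

lemma isSubgradientAt (hp : IsProxPt σ G z p) (hσ : 0 < σ) (hG : ConvexOn ℝ Set.univ G) :
    IsSubgradientAt G p (σ⁻¹ • (z - p)) := by
  intro y
  have hconv : StrongConvexOn Set.univ 1 fun w => σ * G w + ‖w - z‖ ^ 2 / 2 := by
    rw [strongConvexOn_iff_convex]
    refine (((hG.smul hσ.le).sub ((innerSL ℝ z).toLinearMap.concaveOn convex_univ)).add_const
      (‖z‖ ^ 2 / 2)).congr fun w _ => ?_
    simp only [Pi.add_apply, Pi.sub_apply, smul_eq_mul, ContinuousLinearMap.coe_coe,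
      innerSL_apply_apply, norm_sub_sq_real, real_inner_comm w z]
    ring
  have hgrowth := quadratic_growth_of_isMinOn hconv (isMinOn_univ_iff.2 hp) y
  have hnorm : ‖y - z‖ ^ 2 = ‖y - p‖ ^ 2 - 2 * ⟪z - p, y - p⟫ + ‖p - z‖ ^ 2 := by
    rw [← sub_sub_sub_cancel_right y z p, norm_sub_sq_real, real_inner_comm, norm_sub_rev p z]
  rw [real_inner_smul_left, ← le_sub_iff_add_le', inv_mul_le_iff₀ hσ]
  linarith

lemma mul_sq_norm_sub_le_inner {μ : ℝ} {y s : E} (hp : IsProxPt σ G z p) (hσ : 0 < σ)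
    (hG : StrongConvexOn Set.univ μ G) (hμ : 0 ≤ μ) (hs : IsSubgradientAt G y s) :
    σ * μ * ‖p - y‖ ^ 2 ≤ ⟪p - y, z - p - σ • s⟫ := by
  have hpsub := hp.isSubgradientAt hσ (strongConvexOn_zero.1 (hG.mono hμ))
  have hscale : z - p - σ • s = σ • (σ⁻¹ • (z - p) - s) := by
    rw [smul_sub, smul_inv_smul₀ hσ.ne']
  rw [hscale, real_inner_smul_right, mul_assoc]
  gcongr
  exact hpsub.strongly_monotone hs hG

end IsProxPt

end ConvexAnalysis

section Smooth

variable {E : Type*} [NormedAddCommGroup E] [InnerProductSpace ℝ E] [CompleteSpace E]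
  {G : E → ℝ} {G' : E → E} {L μ γ : ℝ}

lemma hasDerivAt_comp_add_smul {g z v : E} {t : ℝ} (hg : HasGradientAt G g (z + t • v)) :
    HasDerivAt (fun s : ℝ => G (z + s • v)) ⟪g, v⟫ t := by
  have hline : HasDerivAt (fun s : ℝ => z + s • v) v t := by
    simpa using ((hasDerivAt_id t).smul_const v).const_add z
  simpa using! hg.hasFDerivAt.comp_hasDerivAt t hline

lemma isSubgradientAt_of_hasGradientAt {g z : E} (hG : ConvexOn ℝ Set.univ G)
    (hg : HasGradientAt G g z) : IsSubgradientAt G z g := by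
  intro y
  have hconv : ConvexOn ℝ Set.univ fun s : ℝ => G (z + s • (y - z)) := by
    refine (hG.comp_affineMap (AffineMap.lineMap z y : ℝ →ᵃ[ℝ] E)).congr fun s _ => ?_
    simp [AffineMap.lineMap_apply, add_comm]
  have hderiv : HasDerivAt (fun s : ℝ => G (z + s • (y - z))) ⟪g, y - z⟫ 0 :=
    hasDerivAt_comp_add_smul (by simpa using hg)
  have hslope := hconv.le_slope_of_hasDerivAt (Set.mem_univ 0) (Set.mem_univ 1) one_pos hderiv
  simp only [slope_def_field, one_smul, zero_smul, add_sub_cancel, add_zero, sub_zero,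
    div_one] at hslope
  linarith

lemma IsProxPt.eq_sub_smul_gradient {σ : ℝ} {g z p : E} (hp : IsProxPt σ G z p)
    (hg : HasGradientAt G g p) : p = z - σ • g := by
  have hgrad : HasGradientAt (fun y => σ * G y + ‖y - z‖ ^ 2 / 2) (σ • g + (p - z)) p := by
    refine ((hg.hasFDerivAt.const_mul σ).add
      (((hasFDerivAt_id p).sub_const z).norm_sq.mul_const 2⁻¹)).congr_fderiv ?_
    ext v
    simp
  have hmin : IsLocalMin (fun y => σ * G y + ‖y - z‖ ^ 2 / 2) p := .of_forall hp
  have hzero : σ • g + (p - z) = 0 :=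
    (InnerProductSpace.toDual ℝ E).map_eq_zero_iff.1 (hmin.hasFDerivAt_eq_zero hgrad.hasFDerivAt)
  rw [eq_sub_iff_add_eq, ← sub_eq_zero, ← hzero]
  abel

lemma le_add_inner_add_sq_norm (hgrad : ∀ z, HasGradientAt G (G' z) z)
    (hlip : ∀ z z', ‖G' z - G' z'‖ ≤ L * ‖z - z'‖) (z v : E) :
    G (z + v) ≤ G z + ⟪G' z, v⟫ + L / 2 * ‖v‖ ^ 2 := by
  let φ : ℝ → ℝ := fun t => G (z + t • v) - t * ⟪G' z, v⟫ - t ^ 2 * (L / 2 * ‖v‖ ^ 2)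
  have hderiv (t : ℝ) : HasDerivAt φ (⟪G' (z + t • v) - G' z, v⟫ - L * t * ‖v‖ ^ 2) t := by
    refine (((hasDerivAt_comp_add_smul (hgrad _)).sub
      ((hasDerivAt_id t).mul_const ⟪G' z, v⟫)).sub
      ((hasDerivAt_pow 2 t).mul_const (L / 2 * ‖v‖ ^ 2))).congr_deriv ?_
    rw [inner_sub_left]
    norm_num
    ring
  have hanti : AntitoneOn φ (Set.Icc 0 1) := by
    refine antitoneOn_of_hasDerivWithinAt_nonpos (convex_Icc 0 1)
      (fun t _ => (hderiv t).continuousAt.continuousWithinAt)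
      (fun t _ => (hderiv t).hasDerivWithinAt) fun t ht => sub_nonpos.2 ?_
    rw [interior_Icc] at ht
    calc ⟪G' (z + t • v) - G' z, v⟫
        ≤ ‖G' (z + t • v) - G' z‖ * ‖v‖ := real_inner_le_norm _ _
      _ ≤ L * ‖z + t • v - z‖ * ‖v‖ := by gcongr; exact hlip _ _
      _ = L * t * ‖v‖ ^ 2 := by
        rw [add_sub_cancel_left, norm_smul, Real.norm_of_nonneg ht.1.le]
        ring
  have h01 : φ 1 ≤ φ 0 :=
    hanti (Set.left_mem_Icc.2 zero_le_one) (Set.right_mem_Icc.2 zero_le_one) zero_le_one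
  simp only [φ, one_smul, zero_smul, add_zero, one_mul, one_pow, zero_mul, ne_eq,
    OfNat.ofNat_ne_zero, not_false_eq_true, zero_pow, sub_zero] at h01
  linarith

lemma add_inner_add_sq_norm_gradient_sub_le (hL : 0 < L) (hG : ConvexOn ℝ Set.univ G)
    (hgrad : ∀ z, HasGradientAt G (G' z) z)
    (hlip : ∀ z z', ‖G' z - G' z'‖ ≤ L * ‖z - z'‖) (z y : E) :
    G z + ⟪G' z, y - z⟫ + 1 / (2 * L) * ‖G' y - G' z‖ ^ 2 ≤ G y := by
  -- Compare `G` at `z` and `y` through the gradient step of `G - ⟪G' z, ·⟫` taken from `y`.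
  set g := G' y - G' z with hg
  have hbelow := isSubgradientAt_of_hasGradientAt hG (hgrad z) (y + -(1 / L) • g)
  have habove := le_add_inner_add_sq_norm hgrad hlip y (-(1 / L) • g)
  rw [add_sub_right_comm, inner_add_right, real_inner_smul_right] at hbelow
  rw [real_inner_smul_right, norm_smul, mul_pow, Real.norm_eq_abs, sq_abs] at habove
  have hself : ⟪G' y, g⟫ = ⟪G' z, g⟫ + ‖g‖ ^ 2 := by
    rw [← real_inner_self_eq_norm_sq, ← inner_add_left, hg, add_sub_cancel]
  rw [hself] at habove
  have hcoeff : L / 2 * ((-(1 / L)) ^ 2 * ‖g‖ ^ 2) - 1 / L * ‖g‖ ^ 2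
      = -(1 / (2 * L) * ‖g‖ ^ 2) := by
    field_simp
    ring
  linarith

lemma gradient_cocoercive (hL : 0 < L) (hG : ConvexOn ℝ Set.univ G)
    (hgrad : ∀ z, HasGradientAt G (G' z) z)
    (hlip : ∀ z z', ‖G' z - G' z'‖ ≤ L * ‖z - z'‖) (x y : E) :
    ‖G' x - G' y‖ ^ 2 ≤ L * ⟪x - y, G' x - G' y⟫ := by
  have hxy := add_inner_add_sq_norm_gradient_sub_le hL hG hgrad hlip x y
  have hyx := add_inner_add_sq_norm_gradient_sub_le hL hG hgrad hlip y x
  have hinner : ⟪x - y, G' x - G' y⟫ = -⟪G' x, y - x⟫ - ⟪G' y, x - y⟫ := by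
    rw [real_inner_comm, inner_sub_left, ← neg_sub x y, inner_neg_right, neg_neg]
  rw [norm_sub_rev (G' y)] at hxy
  rw [← div_le_iff₀' hL, hinner]
  have hhalf : ‖G' x - G' y‖ ^ 2 / L = 2 * (1 / (2 * L) * ‖G' x - G' y‖ ^ 2) := by field_simp
  linarith

lemma sq_norm_gradient_step_sub_le (hL : 0 < L) (hμ : 0 ≤ μ) (hG : StrongConvexOn Set.univ μ G)
    (hgrad : ∀ z, HasGradientAt G (G' z) z)
    (hlip : ∀ z z', ‖G' z - G' z'‖ ≤ L * ‖z - z'‖) (hγ : 0 ≤ γ) (hγL : γ * L ≤ 2) (x y : E) :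
    ‖(x - γ • G' x) - (y - γ • G' y)‖ ^ 2 ≤ (1 - γ * (2 - γ * L) * μ) * ‖x - y‖ ^ 2 := by
  have hconv : ConvexOn ℝ Set.univ G := strongConvexOn_zero.1 (hG.mono hμ)
  have hsub (z : E) : IsSubgradientAt G z (G' z) := isSubgradientAt_of_hasGradientAt hconv (hgrad z)
  have hcoco := gradient_cocoercive hL hconv hgrad hlip x y
  have hmono := (hsub x).strongly_monotone (hsub y) hG
  have hcoeff : 0 ≤ γ * (2 - γ * L) := mul_nonneg hγ (sub_nonneg.2 hγL)
  calc ‖(x - γ • G' x) - (y - γ • G' y)‖ ^ 2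
      = ‖x - y‖ ^ 2 - 2 * γ * ⟪x - y, G' x - G' y⟫ + γ ^ 2 * ‖G' x - G' y‖ ^ 2 := by
        rw [sub_sub_sub_comm, ← smul_sub, norm_sub_sq_real, real_inner_smul_right, norm_smul,
          mul_pow, Real.norm_eq_abs, sq_abs]
        ring
    _ ≤ ‖x - y‖ ^ 2 - 2 * γ * ⟪x - y, G' x - G' y⟫
          + γ ^ 2 * (L * ⟪x - y, G' x - G' y⟫) := by gcongr
    _ = ‖x - y‖ ^ 2 - γ * (2 - γ * L) * ⟪x - y, G' x - G' y⟫ := by ring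
    _ ≤ ‖x - y‖ ^ 2 - γ * (2 - γ * L) * (μ * ‖x - y‖ ^ 2) :=
        sub_le_sub_left (mul_le_mul_of_nonneg_left hmono hcoeff) _
    _ = (1 - γ * (2 - γ * L) * μ) * ‖x - y‖ ^ 2 := by ring

end Smooth

lemma sq_norm_add_le {E : Type*} [SeminormedAddCommGroup E] (v w : E) :
    ‖v + w‖ ^ 2 ≤ 2 * (‖v‖ ^ 2 + ‖w‖ ^ 2) :=
  (pow_le_pow_left₀ (norm_nonneg _) (norm_add_le v w) 2).trans add_sq_le

lemma exists_contraction_rate {θ m δ : ℝ} (hm : 0 ≤ m) (hθ : 0 ≤ θ) (hpos : 0 < θ ∨ 0 < m)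
    (hδ : 0 < δ) :
    ∃ ρ : ℝ, 0 < ρ ∧ ρ ≤ 1 ∧ ∀ {A B D V : ℝ}, 0 ≤ A → 0 ≤ B → 0 ≤ D →
      V + 2 * m * A ≤ (1 - θ) * B + D → V ≤ 2 * A + 2 * D → V ≤ (1 - ρ) * (B + (1 + δ) * D) := by
  rcases hpos with hθpos | hmpos
  · refine ⟨min θ (δ / (1 + δ)), by positivity,
      (min_le_right _ _).trans (div_le_one_of_le₀ (by linarith) (by positivity)), ?_⟩
    intro A B D V hA hB hD hV _
    have hB' : (1 - θ) * B ≤ (1 - min θ (δ / (1 + δ))) * B := by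
      gcongr
      exact min_le_left _ _
    have hD' : D ≤ (1 - min θ (δ / (1 + δ))) * ((1 + δ) * D) := by
      calc D = (1 - δ / (1 + δ)) * ((1 + δ) * D) := by field_simp; ring
        _ ≤ _ := by gcongr; exact min_le_right _ _
    linarith [mul_nonneg hm hA]
  · set ε := min m (δ / 2) with hε
    have hεpos : 0 < ε := lt_min hmpos (half_pos hδ)
    refine ⟨ε / (1 + ε), by positivity, div_le_one_of_le₀ (by linarith) (by positivity), ?_⟩
    intro A B D V hA hB hD hV hVAD
    have hfactor : 1 - ε / (1 + ε) = 1 / (1 + ε) := by field_simp; ring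
    rw [hfactor, one_div_mul_eq_div, le_div_iff₀ (by positivity)]
    have hεm := mul_le_mul_of_nonneg_right (min_le_left m (δ / 2)) hA
    have hεδ := mul_le_mul_of_nonneg_right (min_le_right m (δ / 2)) hD
    have hεV := mul_le_mul_of_nonneg_left hVAD hεpos.le
    have := mul_nonneg hθ hB
    rw [← hε] at hεm hεδ
    linarith

section Lyapunov

variable {𝒳 𝒰 : Type*} [NormedAddCommGroup 𝒳] [InnerProductSpace ℝ 𝒳] [CompleteSpace 𝒳]
  [NormedAddCommGroup 𝒰] [InnerProductSpace ℝ 𝒰] [CompleteSpace 𝒰]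
  {K : 𝒳 →L[ℝ] 𝒰} {γ η m : ℝ}

lemma sq_norm_smul_adjoint_apply_le (hη : ‖K‖ ^ 2 ≤ η) (γ : ℝ) (d : 𝒰) :
    ‖γ • (K†) d‖ ^ 2 ≤ γ ^ 2 * η * ‖d‖ ^ 2 := by
  calc ‖γ • (K†) d‖ ^ 2
      ≤ (‖γ‖ * (‖K†‖ * ‖d‖)) ^ 2 := by rw [norm_smul]; gcongr; exact (K†).le_opNorm d
    _ = γ ^ 2 * ‖K‖ ^ 2 * ‖d‖ ^ 2 := by
      rw [LinearIsometryEquiv.norm_map, mul_pow, mul_pow, Real.norm_eq_abs, sq_abs, mul_assoc]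
    _ ≤ γ ^ 2 * η * ‖d‖ ^ 2 := by gcongr

/-- The Lyapunov function of the PDDY iteration, as a function of the primal error `a = x_R - x*`
and the dual error `d = u - u*`; it is nonnegative when `‖K‖ ^ 2 ≤ η`. -/
def pddyLyapunov (K : 𝒳 →L[ℝ] 𝒰) (γ η : ℝ) (a : 𝒳) (d : 𝒰) : ℝ :=
  ‖a + γ • (K†) d‖ ^ 2 + γ ^ 2 * η * ‖d‖ ^ 2 - γ ^ 2 * ‖(K†) d‖ ^ 2

lemma pddyLyapunov_eq (a : 𝒳) (d : 𝒰) :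
    pddyLyapunov K γ η a d
      = ‖a + γ • (K†) d‖ ^ 2 + (γ ^ 2 * η * ‖d‖ ^ 2 - ‖γ • (K†) d‖ ^ 2) := by
  rw [pddyLyapunov, norm_smul γ, mul_pow, Real.norm_eq_abs, sq_abs, add_sub_assoc]

lemma pddyLyapunov_nonneg (hη : ‖K‖ ^ 2 ≤ η) (a : 𝒳) (d : 𝒰) : 0 ≤ pddyLyapunov K γ η a d := by
  rw [pddyLyapunov_eq]
  exact add_nonneg (sq_nonneg _) (sub_nonneg.2 (sq_norm_smul_adjoint_apply_le hη γ d))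

lemma pddyLyapunov_le (hη : ‖K‖ ^ 2 ≤ η) (a : 𝒳) (d : 𝒰) :
    pddyLyapunov K γ η a d ≤ 2 * ‖a‖ ^ 2 + 2 * (γ ^ 2 * η * ‖d‖ ^ 2) := by
  have hsum := sq_norm_add_le a (γ • (K†) d)
  have hadj := sq_norm_smul_adjoint_apply_le hη γ d
  rw [pddyLyapunov_eq]
  linarith

lemma pddyLyapunov_eq_dual_step {a b : 𝒳} {d d' : 𝒰} (hb : b = a - γ • ((K†) d' - (K†) d)) :
    pddyLyapunov K γ η a d
      = ‖b‖ ^ 2 + γ ^ 2 * η * ‖d'‖ ^ 2 + 2 * γ * ⟪d', (γ * η) • (d - d') + K a⟫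
        + (γ ^ 2 * η * ‖d - d'‖ ^ 2 - ‖γ • (K†) (d - d')‖ ^ 2) := by
  have ha : a = b + γ • ((K†) d' - (K†) d) := by rw [hb, sub_add_cancel]
  rw [pddyLyapunov_eq, inner_add_right, ← ContinuousLinearMap.adjoint_inner_left, ha, map_sub]
  simp only [← real_inner_self_eq_norm_sq, inner_add_left, inner_add_right, inner_sub_left,
    inner_sub_right, real_inner_smul_left, real_inner_smul_right, real_inner_comm b,
    real_inner_comm ((K†) d) ((K†) d'), real_inner_comm d d']
  ring

lemma pddyLyapunov_add_le_of_inner {a c : 𝒳} {d : 𝒰}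
    (h : m * ‖a‖ ^ 2 ≤ ⟪a, c - a - γ • (K†) d⟫) :
    pddyLyapunov K γ η a d + 2 * m * ‖a‖ ^ 2 ≤ ‖c‖ ^ 2 + γ ^ 2 * η * ‖d‖ ^ 2 := by
  have hc : ‖c‖ ^ 2 = ‖a‖ ^ 2 + 2 * ⟪a, c - a⟫ + ‖c - a‖ ^ 2 := by
    rw [← norm_add_sq_real, add_sub_cancel]
  rw [inner_sub_right] at h
  rw [pddyLyapunov_eq, norm_add_sq_real, hc]
  linarith [sq_nonneg ‖c - a‖]

lemma sq_norm_le_of_inner_nonneg (hη : ‖K‖ ^ 2 ≤ η) {a c : 𝒳} {d : 𝒰}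
    (h : 0 ≤ ⟪a, c - a - γ • (K†) d⟫) : ‖a‖ ^ 2 ≤ 2 * (‖c‖ ^ 2 + γ ^ 2 * η * ‖d‖ ^ 2) := by
  have hsq : ‖a‖ ^ 2 ≤ ‖a‖ * ‖c - γ • (K†) d‖ := by
    rw [sub_right_comm, inner_sub_right, sub_nonneg, real_inner_self_eq_norm_sq] at h
    exact h.trans (real_inner_le_norm _ _)
  calc ‖a‖ ^ 2 ≤ ‖c - γ • (K†) d‖ ^ 2 := by linarith [two_mul_le_add_sq ‖a‖ ‖c - γ • (K†) d‖]
    _ ≤ 2 * (‖c‖ ^ 2 + ‖γ • (K†) d‖ ^ 2) := by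
      simpa only [sub_eq_add_neg, norm_neg] using sq_norm_add_le c (-(γ • (K†) d))
    _ ≤ 2 * (‖c‖ ^ 2 + γ ^ 2 * η * ‖d‖ ^ 2) := by
      gcongr
      exact sq_norm_smul_adjoint_apply_le hη γ d

end Lyapunov

section PDDY

variable {𝒳 𝒰 : Type*} [NormedAddCommGroup 𝒳] [InnerProductSpace ℝ 𝒳] [CompleteSpace 𝒳]
  [NormedAddCommGroup 𝒰] [InnerProductSpace ℝ 𝒰] [CompleteSpace 𝒰]

/-- One iteration of PDDY with constant stepsize, from `(x_R, u)` to `(x', x_R', u')`. The dual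
update `u' = prox_{H*/(γη)}(u + K x_R / (γη))` is encoded by the Moreau identity, so that only
proximal points `w` of `H` appear. -/
structure IsPDDYStep (K : 𝒳 →L[ℝ] 𝒰) (F' : 𝒳 → 𝒳) (R : 𝒳 → ℝ) (H : 𝒰 → ℝ) (γ η : ℝ)
    (xR : 𝒳) (u : 𝒰) (x' xR' : 𝒳) (u' : 𝒰) : Prop where
  dual_prox : ∃ w, IsProxPt (γ * η) H ((γ * η) • (u + (1 / (γ * η)) • K xR)) w ∧
    u' = (u + (1 / (γ * η)) • K xR) - (1 / (γ * η)) • w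
  primal_correction : x' = xR - γ • ((K†) u' - (K†) u)
  primal_prox : IsProxPt γ R (x' - γ • F' x' - γ • (K†) u') xR'

namespace IsPDDYStep

variable {K : 𝒳 →L[ℝ] 𝒰} {F R : 𝒳 → ℝ} {F' : 𝒳 → 𝒳} {H : 𝒰 → ℝ} {H' : 𝒰 → 𝒰}
  {γ η L_F L_H μF μR : ℝ} {xR x' xR' xs : 𝒳} {u u' : 𝒰}

lemma dual_eq_gradient (h : IsPDDYStep K F' R H γ η xR u x' xR' u') (hγη : γ * η ≠ 0)
    (hHgrad : ∀ v, HasGradientAt H (H' v) v) : u' = H' ((γ * η) • (u - u') + K xR) := by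
  obtain ⟨w, hw, hu'⟩ := h.dual_prox
  have hgrad : u' = H' w := by
    rw [hu', ← smul_right_inj hγη, smul_sub (γ * η), smul_smul _ _ w, mul_one_div_cancel hγη,
      one_smul, sub_eq_iff_eq_add, ← sub_eq_iff_eq_add']
    exact (hw.eq_sub_smul_gradient (hHgrad w)).symm
  have hpoint : (γ * η) • (u - u') + K xR = w := by
    rw [hu', smul_sub, smul_sub, smul_add, smul_smul, smul_smul, mul_one_div_cancel hγη, one_smul,
      one_smul]
    abel
  rw [hpoint, hgrad]

lemma sq_norm_add_le_pddyLyapunov (h : IsPDDYStep K F' R H γ η xR u x' xR' u') (hγ : 0 < γ)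
    (hη : ‖K‖ ^ 2 ≤ η) (hLH : 0 < L_H) (hHconv : ConvexOn ℝ Set.univ H)
    (hHgrad : ∀ v, HasGradientAt H (H' v) v)
    (hHlip : ∀ v v', ‖H' v - H' v'‖ ≤ L_H * ‖v - v'‖) (xs : 𝒳) :
    ‖x' - xs‖ ^ 2 + (1 + 2 / (1 + γ * η * L_H)) * (γ ^ 2 * η * ‖u' - H' (K xs)‖ ^ 2)
      ≤ pddyLyapunov K γ η (xR - xs) (u - H' (K xs)) := by
  rcases ((sq_nonneg ‖K‖).trans hη).eq_or_lt with rfl | hηpos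
  · -- Here `K = 0`, and division by `γ * η = 0` in the dual update carries no information on `u'`.
    have hK : K = 0 := norm_eq_zero.1 (pow_eq_zero_iff two_ne_zero |>.1 (hη.antisymm (sq_nonneg _)))
    simp [pddyLyapunov, h.primal_correction, hK]
  set us := H' (K xs) with hus
  have hx' : x' - xs = xR - xs - γ • ((K†) (u' - us) - (K†) (u - us)) := by
    rw [h.primal_correction, map_sub, map_sub, sub_sub_sub_cancel_right, sub_right_comm]
  have hgrad := h.dual_eq_gradient (mul_pos hγ hηpos).ne' hHgrad
  have hcoco : ‖u' - us‖ ^ 2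
      ≤ L_H * ⟪u' - us, (γ * η) • ((u - us) - (u' - us)) + K (xR - xs)⟫ := by
    have := gradient_cocoercive hLH hHconv hHgrad hHlip ((γ * η) • (u - u') + K xR) (K xs)
    rwa [← hgrad, real_inner_comm, add_sub_assoc, ← map_sub, ← hus,
      ← sub_sub_sub_cancel_right u u' us] at this
  have hadj := sq_norm_smul_adjoint_apply_le hη γ ((u - us) - (u' - us))
  have hgain : 2 / (1 + γ * η * L_H) * (γ ^ 2 * η * ‖u' - us‖ ^ 2)
      ≤ 2 * γ * ⟪u' - us, (γ * η) • ((u - us) - (u' - us)) + K (xR - xs)⟫ := by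
    calc 2 / (1 + γ * η * L_H) * (γ ^ 2 * η * ‖u' - us‖ ^ 2)
        ≤ 2 / (γ * η * L_H) * (γ ^ 2 * η * ‖u' - us‖ ^ 2) := by gcongr; linarith
      _ = 2 * γ * (‖u' - us‖ ^ 2 / L_H) := by field_simp
      _ ≤ _ := by gcongr; exact (div_le_iff₀' hLH).2 hcoco
  rw [pddyLyapunov_eq_dual_step hx']
  linarith

lemma mul_sq_norm_le_inner (h : IsPDDYStep K F' R H γ η xR u x' xR' u') (hγ : 0 < γ)
    (hRsc : StrongConvexOn Set.univ μR R) (hμR : 0 ≤ μR) {us : 𝒰}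
    (hopt : IsSubgradientAt R xs (-(F' xs + (K†) us))) :
    γ * μR * ‖xR' - xs‖ ^ 2 ≤ ⟪xR' - xs,
      ((x' - γ • F' x') - (xs - γ • F' xs)) - (xR' - xs) - γ • (K†) (u' - us)⟫ := by
  refine (h.primal_prox.mul_sq_norm_sub_le_inner hγ hRsc hμR hopt).trans_eq ?_
  rw [map_sub]
  congr 1
  module

lemma sq_norm_sub_le_two_mul_pddyLyapunov (h : IsPDDYStep K F' R H γ η xR u x' xR' u')
    (hLF : 0 < L_F) (hF : ConvexOn ℝ Set.univ F) (hFgrad : ∀ z, HasGradientAt F (F' z) z)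
    (hFlip : ∀ z z', ‖F' z - F' z'‖ ≤ L_F * ‖z - z'‖) (hR : ConvexOn ℝ Set.univ R)
    (hLH : 0 < L_H) (hH : ConvexOn ℝ Set.univ H) (hHgrad : ∀ v, HasGradientAt H (H' v) v)
    (hHlip : ∀ v v', ‖H' v - H' v'‖ ≤ L_H * ‖v - v'‖)
    (hopt : IsSubgradientAt R xs (-(F' xs + (K†) (H' (K xs)))))
    (hγ : 0 < γ) (hγL : γ * L_F ≤ 2) (hη : ‖K‖ ^ 2 ≤ η) :
    ‖xR' - xs‖ ^ 2 ≤ 2 * pddyLyapunov K γ η (xR - xs) (u - H' (K xs)) := by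
  have hη0 : 0 ≤ η := (sq_nonneg ‖K‖).trans hη
  have hinner := h.mul_sq_norm_le_inner hγ (strongConvexOn_zero.2 hR) le_rfl hopt
  have hgradient := sq_norm_gradient_step_sub_le hLF le_rfl (strongConvexOn_zero.2 hF) hFgrad hFlip
    hγ.le hγL x' xs
  have hdual := h.sq_norm_add_le_pddyLyapunov hγ hη hLH hH hHgrad hHlip xs
  have hgain : 0 ≤ 2 / (1 + γ * η * L_H) * (γ ^ 2 * η * ‖u' - H' (K xs)‖ ^ 2) := by positivity
  rw [mul_zero, zero_mul] at hinner
  rw [mul_zero, sub_zero, one_mul] at hgradient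
  linarith [sq_norm_le_of_inner_nonneg hη hinner]

lemma exists_pddyLyapunov_le_mul (hLF : 0 < L_F) (hFgrad : ∀ z, HasGradientAt F (F' z) z)
    (hFlip : ∀ z z', ‖F' z - F' z'‖ ≤ L_F * ‖z - z'‖)
    (hμF : 0 ≤ μF) (hμR : 0 ≤ μR) (hμ : 0 < μF + μR)
    (hFsc : StrongConvexOn Set.univ μF F) (hRsc : StrongConvexOn Set.univ μR R)
    (hLH : 0 < L_H) (hH : ConvexOn ℝ Set.univ H) (hHgrad : ∀ v, HasGradientAt H (H' v) v)
    (hHlip : ∀ v v', ‖H' v - H' v'‖ ≤ L_H * ‖v - v'‖)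
    (hopt : IsSubgradientAt R xs (-(F' xs + (K†) (H' (K xs)))))
    (hγ : 0 < γ) (hγL : γ * L_F < 2) (hη : ‖K‖ ^ 2 ≤ η) :
    ∃ ρ : ℝ, 0 < ρ ∧ ρ ≤ 1 ∧ ∀ {xR u x' xR' u'}, IsPDDYStep K F' R H γ η xR u x' xR' u' →
      pddyLyapunov K γ η (xR' - xs) (u' - H' (K xs))
        ≤ (1 - ρ) * pddyLyapunov K γ η (xR - xs) (u - H' (K xs)) := by
  have hη0 : 0 ≤ η := (sq_nonneg ‖K‖).trans hη
  have hτ : 0 < γ * (2 - γ * L_F) := mul_pos hγ (sub_pos.2 hγL)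
  have hμ_pos : 0 < μF ∨ 0 < μR := by
    by_contra! hle
    linarith
  obtain ⟨ρ, hρ0, hρ1, hρ⟩ := exists_contraction_rate (δ := 2 / (1 + γ * η * L_H))
    (mul_nonneg hγ.le hμR) (mul_nonneg hτ.le hμF)
    (hμ_pos.imp (mul_pos hτ) (mul_pos hγ)) (by positivity)
  refine ⟨ρ, hρ0, hρ1, fun {xR u x' xR' u'} h => ?_⟩
  have hprimal := pddyLyapunov_add_le_of_inner (η := η) (h.mul_sq_norm_le_inner hγ hRsc hμR hopt)
  have hgradient := sq_norm_gradient_step_sub_le hLF hμF hFsc hFgrad hFlip hγ.le hγL.le x' xs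
  have hdual := h.sq_norm_add_le_pddyLyapunov hγ hη hLH hH hHgrad hHlip xs
  have hcontract := hρ (sq_nonneg _) (sq_nonneg _) (by positivity)
    (hprimal.trans (add_le_add_left hgradient _)) (pddyLyapunov_le hη _ _)
  exact hcontract.trans (mul_le_mul_of_nonneg_left hdual (sub_nonneg.2 hρ1))

end IsPDDYStep

end PDDY

theorem pddy_linear_convergence_general
    {𝒳 𝒰 : Type*}
    [NormedAddCommGroup 𝒳] [InnerProductSpace ℝ 𝒳] [CompleteSpace 𝒳]
    [NormedAddCommGroup 𝒰] [InnerProductSpace ℝ 𝒰] [CompleteSpace 𝒰]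
    {K : 𝒳 →L[ℝ] 𝒰} {F R : 𝒳 → ℝ} {H : 𝒰 → ℝ} {F' : 𝒳 → 𝒳} {H' : 𝒰 → 𝒰}
    {L_F L_H μF μR γ η : ℝ}
    (hLF : 0 < L_F) (hFgrad : ∀ z, HasGradientAt F (F' z) z)
    (hFlip : ∀ z z', ‖F' z - F' z'‖ ≤ L_F * ‖z - z'‖)
    (hμF : 0 ≤ μF) (hμR : 0 ≤ μR) (hμ : 0 < μF + μR)
    (hFsc : StrongConvexOn Set.univ μF F) (hRsc : StrongConvexOn Set.univ μR R)
    (hLH : 0 < L_H) (hHconv : ConvexOn ℝ Set.univ H) (hHgrad : ∀ v, HasGradientAt H (H' v) v)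
    (hHlip : ∀ v v', ‖H' v - H' v'‖ ≤ L_H * ‖v - v'‖)
    {xstar : 𝒳} (hopt : IsSubgradientAt R xstar (-(F' xstar + (K†) (H' (K xstar)))))
    (hγ0 : 0 < γ) (hγ2 : γ < 2 / L_F) (hη : ‖K‖ ^ 2 ≤ η) :
    ∃ ρ : ℝ, 0 < ρ ∧ ρ ≤ 1 ∧ ∀ (x xR : ℕ → 𝒳) (u : ℕ → 𝒰),
      (∀ k, IsPDDYStep K F' R H γ η (xR k) (u k) (x (k + 1)) (xR (k + 1)) (u (k + 1))) →
      ∀ k, ‖xR (k + 1) - xstar‖ ^ 2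
        ≤ 2 * (1 - ρ) ^ k * pddyLyapunov K γ η (xR 0 - xstar) (u 0 - H' (K xstar)) := by
  have hγL : γ * L_F < 2 := (lt_div_iff₀ hLF).1 hγ2
  obtain ⟨ρ, hρ0, hρ1, hcontract⟩ := IsPDDYStep.exists_pddyLyapunov_le_mul hLF hFgrad hFlip hμF hμR
    hμ hFsc hRsc hLH hHconv hHgrad hHlip hopt hγ0 hγL hη
  refine ⟨ρ, hρ0, hρ1, fun x xR u hstep k => ?_⟩
  calc ‖xR (k + 1) - xstar‖ ^ 2
      ≤ 2 * pddyLyapunov K γ η (xR k - xstar) (u k - H' (K xstar)) :=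
        (hstep k).sq_norm_sub_le_two_mul_pddyLyapunov hLF (strongConvexOn_zero.1 (hFsc.mono hμF))
          hFgrad hFlip (strongConvexOn_zero.1 (hRsc.mono hμR)) hLH hHconv hHgrad hHlip hopt hγ0
          hγL.le hη
    _ ≤ 2 * ((1 - ρ) ^ k * pddyLyapunov K γ η (xR 0 - xstar) (u 0 - H' (K xstar))) := by
        gcongr
        exact le_geom (u := fun j => pddyLyapunov K γ η (xR j - xstar) (u j - H' (K xstar)))
          (sub_nonneg.2 hρ1) k fun j _ => hcontract (hstep j)
    _ = 2 * (1 - ρ) ^ k * pddyLyapunov K γ η (xR 0 - xstar) (u 0 - H' (K xstar)) := by ring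

/-- Theorem 5, second part: linear convergence of the PDDY algorithm when
`μ_F + μ_R > 0` and `H` is `L_H`-smooth. -/
theorem pddy_linear_convergence
    {𝒳 𝒰 : Type*}
    [NormedAddCommGroup 𝒳] [InnerProductSpace ℝ 𝒳] [FiniteDimensional ℝ 𝒳]
    [NormedAddCommGroup 𝒰] [InnerProductSpace ℝ 𝒰] [FiniteDimensional ℝ 𝒰]
    (K : 𝒳 →L[ℝ] 𝒰)
    (F R : 𝒳 → ℝ) (H : 𝒰 → ℝ) (F' : 𝒳 → 𝒳) (L_F : ℝ)
    (hLF : 0 < L_F)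
    (hFconv : ConvexOn ℝ Set.univ F)
    (hRconv : ConvexOn ℝ Set.univ R)
    (hHconv : ConvexOn ℝ Set.univ H)
    (hFgrad : ∀ z, HasGradientAt F (F' z) z)
    (hFlip : ∀ z z', ‖F' z - F' z'‖ ≤ L_F * ‖z - z'‖)
    -- strong convexity
    (μF μR : ℝ) (hμF : 0 ≤ μF) (hμR : 0 ≤ μR) (hμ : 0 < μF + μR)
    (hFsc : ConvexOn ℝ Set.univ fun z => F z - μF / 2 * ‖z‖ ^ 2)
    (hRsc : ConvexOn ℝ Set.univ fun z => R z - μR / 2 * ‖z‖ ^ 2)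
    -- H is L_H-smooth
    (H' : 𝒰 → 𝒰) (L_H : ℝ) (hLH : 0 < L_H)
    (hHgrad : ∀ v, HasGradientAt H (H' v) v)
    (hHlip : ∀ v v', ‖H' v - H' v'‖ ≤ L_H * ‖v - v'‖)
    -- x* is the (unique) minimizer of Ψ, and Assumption 1 holds
    (xstar : 𝒳)
    (hxstar : ∀ y, F xstar + R xstar + H (K xstar) ≤ F y + R y + H (K y))
    (rstar : 𝒳)
    (hrstar : IsSubgradientAt R xstar rstar)
    (hopt : F' xstar + rstar
      + (ContinuousLinearMap.adjoint K) (H' (K xstar)) = 0)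
    -- u* is the (unique) dual solution
    (ustar : 𝒰) (hustar : ustar = H' (K xstar))
    -- parameters
    (γ η : ℝ) (hγ0 : 0 < γ) (hγ2 : γ < 2 / L_F) (hη : ‖K‖ ^ 2 ≤ η)
    -- PDDY iterates
    (x xR : ℕ → 𝒳) (u : ℕ → 𝒰) (p : ℕ → 𝒳)
    (hp : ∀ k, p k = (ContinuousLinearMap.adjoint K) (u k))
    (hu : ∀ k, ∃ w, IsProxPt (γ*η) H
        ((γ*η) • (u k + (1/(γ*η)) • K (xR k))) w ∧
      u (k+1) = (u k + (1/(γ*η)) • K (xR k)) - (1/(γ*η)) • w)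
    (hxit : ∀ k, x (k+1) = xR k - γ • (p (k+1) - p k))
    (hxR : ∀ k, IsProxPt γ R
      (x (k+1) - γ • F' (x (k+1)) - γ • p (k+1)) (xR (k+1))) :
    ∃ ρ : ℝ, 0 < ρ ∧ ρ ≤ 1 ∧ ∀ k : ℕ,
      ‖xR (k+1) - xstar‖^2 ≤ 4 * (1 - ρ)^k *
        (‖xR 0 - xstar + γ • (ContinuousLinearMap.adjoint K) (u 0 - ustar)‖^2
          + γ^2 * η * ‖u 0 - ustar‖^2
          - γ^2 * ‖(ContinuousLinearMap.adjoint K) (u 0 - ustar)‖^2) := by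
  subst hustar
  have hsub : IsSubgradientAt R xstar (-(F' xstar + (K†) (H' (K xstar)))) := by
    rwa [← eq_neg_of_add_eq_zero_right (add_right_comm _ rstar _ ▸ hopt)]
  obtain ⟨ρ, hρ0, hρ1, hρ⟩ := pddy_linear_convergence_general hLF hFgrad hFlip hμF hμR hμ
    (strongConvexOn_iff_convex.2 hFsc) (strongConvexOn_iff_convex.2 hRsc) hLH hHconv hHgrad hHlip
    hsub hγ0 hγ2 hη
  refine ⟨ρ, hρ0, hρ1, fun k => (hρ x xR u (fun j => ⟨hu j, ?_, ?_⟩) k).trans ?_⟩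
  · rw [hxit, hp, hp]
  · rw [← hp]
    exact hxR j
  · have hpow := pow_nonneg (sub_nonneg.2 hρ1) k
    exact mul_le_mul_of_nonneg_right (by linarith) (pddyLyapunov_nonneg hη _ _)
end
end

section
/- Lemma 2 (linear convergence of the Davis–Yin algorithm): Suppose μ_F̃ + μ_G + μ_J > 0, and that G is differentiable with L_G-Lipschitz gradient for some L_G > 0, or J is differentiable with L_J-Lipschitz gradient for some L_J > 0. Let z* be the unique minimizer of F̃ + G + J and u_G* the unique element with u_G* ∈ ∂G(z*) and −∇F̃(z*) − u_G* ∈ ∂J(z*); set r* = z* + γ·u_G*. Let γ_k ≡ γ ∈ (0, 2/L_F̃). Then there exists ρ ∈ (0,1] such that for every k ≥ 0, ‖r^k − r*‖² ≤ (1−ρ)^k · ‖r⁰ − r*‖². -/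
open Filter Topology RealInnerProductSpace

noncomputable section

/-!
Measure a Davis–Yin step against the fixed point `r* = z* + γ u_G*`: let `a = z_G - z*`,
`b = z_J - z*`, and let `g`, `f`, `j` be the differences of the (sub)gradients of `G`, `F̃`, `J`.
The optimality conditions of the two proximal points give `a - b = γ (g + j + f)`, while the errors
before and after the step are `a + γ g` and `b + γ g`. Expanding the squares,

  `‖a + γ g‖² - ‖b + γ g‖² = 2γ (⟪g, a⟫ + ⟪j, b⟫ + ⟪f, a⟫) + γ² (‖g + j‖² - ‖f‖²)`,

where cocoercivity of `∇F̃` absorbs `‖f‖²` because `γ L < 2`. This decrease therefore controls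
`‖a - b‖²`, then, by strong monotonicity of one of the three operators, `‖a‖²` and `‖b‖²`, and
finally, since `g` or `j` is Lipschitz in `a` or `b`, the whole error `‖a + γ g‖²`.
-/

theorem sub_add_smul_inv_smul_sub_sub {𝕜 E : Type*} [DivisionRing 𝕜] [AddCommGroup E]
    [Module 𝕜 E] {γ : 𝕜} (hγ : γ ≠ 0) (x r w z u : E) :
    x - z + γ • (γ⁻¹ • (r - w) - u) = x + r - w - (z + γ • u) := by
  rw [smul_sub, smul_inv_smul₀ hγ]
  abel

theorem norm_add_sq_le_two_mul {E : Type*} [SeminormedAddGroup E] (x y : E) :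
    ‖x + y‖ ^ 2 ≤ 2 * (‖x‖ ^ 2 + ‖y‖ ^ 2) :=
  (pow_le_pow_left₀ (norm_nonneg _) (norm_add_le x y) 2).trans add_sq_le

section NormedSpace

variable {E : Type*} [NormedAddCommGroup E] [NormedSpace ℝ E]

theorem uniformConvexOn_add_le_of_isMinOn {s : Set E} {φ : ℝ → ℝ} {f : E → ℝ} {p y : E}
    (hf : UniformConvexOn s φ f) (hmin : IsMinOn f s p) (hp : p ∈ s) (hy : y ∈ s) :
    f p + φ ‖p - y‖ ≤ f y := by
  have hsegment : ∀ t ∈ Set.Ioo (0 : ℝ) 1, f p + φ ‖p - y‖ ≤ f y + t * φ ‖p - y‖ := by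
    rintro t ⟨ht0, ht1⟩
    have hconv := hf.2 hp hy (sub_nonneg.2 ht1.le) ht0.le (sub_add_cancel 1 t)
    have hle := isMinOn_iff.1 hmin _
      (hf.1 hp hy (sub_nonneg.2 ht1.le) ht0.le (sub_add_cancel 1 t))
    simp only [smul_eq_mul] at hconv
    refine le_of_mul_le_mul_left ?_ ht0
    linarith
  have hlim : Tendsto (fun t : ℝ => f y + t * φ ‖p - y‖) (𝓝[>] 0) (𝓝 (f y)) :=
    ((by fun_prop : Continuous fun t : ℝ => f y + t * φ ‖p - y‖).tendsto' 0 _ (by simp)).mono_left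
      nhdsWithin_le_nhds
  refine ge_of_tendsto hlim ?_
  filter_upwards [Ioo_mem_nhdsGT one_pos] using hsegment

theorem norm_add_smul_sq_le_of_norm_le {x y : E} {γ M : ℝ} (hγ : 0 ≤ γ) (hy : ‖y‖ ≤ M * ‖x‖) :
    ‖x + γ • y‖ ^ 2 ≤ (1 + γ * M) ^ 2 * ‖x‖ ^ 2 := by
  rw [← mul_pow]
  refine pow_le_pow_left₀ (norm_nonneg _) ?_ 2
  calc ‖x + γ • y‖ ≤ ‖x‖ + γ * ‖y‖ := by
        simpa [norm_smul, abs_of_nonneg hγ] using norm_add_le x (γ • y)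
    _ ≤ ‖x‖ + γ * (M * ‖x‖) := by gcongr
    _ = (1 + γ * M) * ‖x‖ := by ring

end NormedSpace

section InnerProductSpace

variable {E : Type*} [NormedAddCommGroup E] [InnerProductSpace ℝ E]

theorem IsSubgradientAt.add_inner_add_norm_sq_le {G : E → ℝ} {μ : ℝ} {z u : E}
    (hu : IsSubgradientAt G z u) (hG : StrongConvexOn Set.univ μ G) (y : E) :
    G z + ⟪u, y - z⟫ + μ / 2 * ‖z - y‖ ^ 2 ≤ G y := by
  have hlinear : ConvexOn ℝ Set.univ (innerSL ℝ (-u)) :=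
    (innerSL ℝ (-u)).toLinearMap.convexOn convex_univ
  have hmin : IsMinOn (G + ⇑(innerSL ℝ (-u))) Set.univ z := isMinOn_iff.2 fun x _ => by
    have := hu x
    simp only [Pi.add_apply, innerSL_apply_apply, inner_neg_left, inner_sub_right] at this ⊢
    linarith
  have hgrowth := uniformConvexOn_add_le_of_isMinOn (hG.add hlinear.uniformConvexOn_zero) hmin
    (Set.mem_univ z) (Set.mem_univ y)
  simp only [Pi.add_apply, Pi.zero_apply, innerSL_apply_apply, inner_neg_left] at hgrowth
  rw [inner_sub_right]
  linarith

theorem IsSubgradientAt.mul_norm_sq_le_inner {G : E → ℝ} {μ : ℝ} {z u z' u' : E}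
    (hu : IsSubgradientAt G z u) (hu' : IsSubgradientAt G z' u')
    (hG : StrongConvexOn Set.univ μ G) : μ * ‖z - z'‖ ^ 2 ≤ ⟪u - u', z - z'⟫ := by
  have h := hu.add_inner_add_norm_sq_le hG z'
  have h' := hu'.add_inner_add_norm_sq_le hG z
  rw [norm_sub_rev] at h'
  simp only [inner_sub_left, inner_sub_right] at h h' ⊢
  linarith

/- The proximal objective is `1`-strongly convex, and its quadratic growth around `p` is exactly
the subgradient inequality. -/
theorem IsProxPt.isSubgradientAt_s10 {G : E → ℝ} {γ : ℝ} {z p : E} (hp : IsProxPt γ G z p)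
    (hγ : 0 < γ) (hG : ConvexOn ℝ Set.univ G) : IsSubgradientAt G p (γ⁻¹ • (z - p)) := by
  have hconv : StrongConvexOn Set.univ 1 fun y => γ * G y + ‖y - z‖ ^ 2 / 2 := by
    have haffine : ConvexOn ℝ Set.univ fun y => innerSL ℝ (-z) y + ‖z‖ ^ 2 / 2 :=
      ((innerSL ℝ (-z)).toLinearMap.convexOn convex_univ).add_const _
    refine strongConvexOn_iff_convex.2 (((hG.smul hγ.le).add haffine).congr fun y _ => ?_)
    simp only [Pi.add_apply, smul_eq_mul, innerSL_apply_apply, inner_neg_left, norm_sub_sq_real,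
      real_inner_comm]
    ring
  intro y
  have hgrowth := uniformConvexOn_add_le_of_isMinOn hconv (isMinOn_iff.2 fun x _ => hp x)
    (Set.mem_univ p) (Set.mem_univ y)
  have hsq : ‖y - z‖ ^ 2 = ‖p - y‖ ^ 2 + ‖p - z‖ ^ 2 - 2 * ⟪z - p, y - p⟫ := by
    rw [← sub_sub_sub_cancel_right y z p, norm_sub_sq_real, real_inner_comm, norm_sub_rev y p,
      norm_sub_rev z p]
    ring
  rw [real_inner_smul_left]
  refine le_of_mul_le_mul_left ?_ hγ
  rw [mul_add, mul_inv_cancel_left₀ hγ.ne']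
  linarith

end InnerProductSpace

section Gradient

variable {E : Type*} [NormedAddCommGroup E] [InnerProductSpace ℝ E] [CompleteSpace E]
  {F : E → ℝ}

theorem hasDerivAt_comp_add_smul_of_hasGradientAt {x v w : E} {t : ℝ}
    (h : HasGradientAt F w (x + t • v)) : HasDerivAt (fun s : ℝ => F (x + s • v)) ⟪w, v⟫ t := by
  have hline : HasDerivAt (fun s : ℝ => x + s • v) v t := by
    simpa using ((hasDerivAt_id t).smul_const v).const_add x
  simpa using! h.hasFDerivAt.comp_hasDerivAt t hline

theorem isSubgradientAt_of_hasGradientAt_s10 {z w : E} (h : HasGradientAt F w z)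
    (hF : ConvexOn ℝ Set.univ F) : IsSubgradientAt F z w := by
  intro y
  have hderiv : HasDerivAt (F ∘ AffineMap.lineMap (k := ℝ) z y) ⟪w, y - z⟫ 0 := by
    have := hasDerivAt_comp_add_smul_of_hasGradientAt (v := y - z) (t := 0)
      (by simpa using h)
    convert this using 2 with s
    simp [AffineMap.lineMap_apply, add_comm]
  have hslope := (hF.comp_affineMap (AffineMap.lineMap z y : ℝ →ᵃ[ℝ] E)).le_slope_of_hasDerivAt
    (Set.mem_univ 0) (Set.mem_univ 1) one_pos hderiv
  simp only [slope_def_field, Function.comp_apply, AffineMap.lineMap_apply_one,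
    AffineMap.lineMap_apply_zero, sub_zero, div_one] at hslope
  linarith

theorem IsSubgradientAt.eq_of_hasGradientAt {z u w : E} (hu : IsSubgradientAt F z u)
    (h : HasGradientAt F w z) : u = w := by
  have hmin : IsLocalMin (fun y => F y - innerSL ℝ u y) z := Eventually.of_forall fun y => by
    have := hu y
    simp only [innerSL_apply_apply, inner_sub_right] at this ⊢
    linarith
  have hzero := hmin.hasFDerivAt_eq_zero (h.hasFDerivAt.sub (innerSL ℝ u).hasFDerivAt)
  exact ((InnerProductSpace.toDual ℝ E).injective (sub_eq_zero.1 hzero)).symm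

/-- `F` is differentiable with gradient `F'`, and `F'` is Lipschitz with constant `L`
(`L`-smoothness of `F`). The constant is a real number, so that it can enter the step-size
condition directly. -/
structure HasLipschitzGradient (F : E → ℝ) (F' : E → E) (L : ℝ) : Prop where
  hasGradientAt : ∀ z, HasGradientAt F (F' z) z
  norm_sub_le : ∀ z z', ‖F' z - F' z'‖ ≤ L * ‖z - z'‖

namespace HasLipschitzGradient

variable {F' : E → E} {L : ℝ}

theorem norm_subgradient_sub_le (h : HasLipschitzGradient F F' L) {z u z' u' : E}
    (hu : IsSubgradientAt F z u) (hu' : IsSubgradientAt F z' u') :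
    ‖u - u'‖ ≤ L * ‖z - z'‖ := by
  rw [hu.eq_of_hasGradientAt (h.hasGradientAt z), hu'.eq_of_hasGradientAt (h.hasGradientAt z')]
  exact h.norm_sub_le z z'

theorem apply_add_le (h : HasLipschitzGradient F F' L) (x v : E) :
    F (x + v) ≤ F x + ⟪F' x, v⟫ + L / 2 * ‖v‖ ^ 2 := by
  have hF (t : ℝ) : HasDerivAt (fun s : ℝ => F (x + s • v)) ⟪F' (x + t • v), v⟫ t :=
    hasDerivAt_comp_add_smul_of_hasGradientAt (h.hasGradientAt _)
  have hbound (t : ℝ) : HasDerivAt (fun s : ℝ => F x + s * ⟪F' x, v⟫ + s ^ 2 * (L / 2 * ‖v‖ ^ 2))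
      (⟪F' x, v⟫ + t * (L * ‖v‖ ^ 2)) t := by
    convert! (((hasDerivAt_id t).mul_const ⟪F' x, v⟫).const_add (F x)).add
      ((hasDerivAt_pow 2 t).mul_const (L / 2 * ‖v‖ ^ 2)) using 1
    simp only [Nat.cast_ofNat, Nat.add_one_sub_one, pow_one]
    ring
  have hderiv_le (t : ℝ) (ht : 0 ≤ t) :
      ⟪F' (x + t • v), v⟫ ≤ ⟪F' x, v⟫ + t * (L * ‖v‖ ^ 2) := by
    have hlip := h.norm_sub_le (x + t • v) x
    rw [add_sub_cancel_left, norm_smul, Real.norm_of_nonneg ht] at hlip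
    rw [← sub_le_iff_le_add', ← inner_sub_left]
    calc ⟪F' (x + t • v) - F' x, v⟫ ≤ ‖F' (x + t • v) - F' x‖ * ‖v‖ := real_inner_le_norm _ _
      _ ≤ L * (t * ‖v‖) * ‖v‖ := by gcongr
      _ = t * (L * ‖v‖ ^ 2) := by ring
  have hle := image_le_of_deriv_right_le_deriv_boundary (a := 0) (b := 1)
    (fun t _ => (hF t).continuousAt.continuousWithinAt) (fun t _ => (hF t).hasDerivWithinAt)
    (by simp) (fun t _ => (hbound t).continuousAt.continuousWithinAt)
    (fun t _ => (hbound t).hasDerivWithinAt) (fun t ht => hderiv_le t ht.1)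
    (Set.right_mem_Icc.2 zero_le_one)
  simpa using hle

/- Compare the lower bound at `x` with the upper bound at `y` at the point
`y - L⁻¹ • (F' y - u)`, where the latter is minimal after subtracting `⟪u, ·⟫`. -/
theorem add_inner_add_norm_sq_le (h : HasLipschitzGradient F F' L) (hL : 0 < L) {x u : E}
    (hu : IsSubgradientAt F x u) (y : E) :
    F x + ⟪u, y - x⟫ + ‖F' y - u‖ ^ 2 / (2 * L) ≤ F y := by
  set w := F' y - u
  have hupper := h.apply_add_le y (-(L⁻¹ • w))
  have hlower := hu (y + -(L⁻¹ • w))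
  have hw : ⟪F' y, w⟫ = ⟪u, w⟫ + ‖w‖ ^ 2 := by
    rw [← real_inner_self_eq_norm_sq, ← inner_add_left, add_sub_cancel]
  have hsq : L / 2 * ‖-(L⁻¹ • w)‖ ^ 2 = ‖w‖ ^ 2 / (2 * L) := by
    rw [norm_neg, norm_smul, Real.norm_of_nonneg (inv_nonneg.2 hL.le)]
    field_simp
  have hhalf : L⁻¹ * ‖w‖ ^ 2 = ‖w‖ ^ 2 / (2 * L) + ‖w‖ ^ 2 / (2 * L) := by
    field_simp
    ring
  rw [hsq, inner_neg_right, real_inner_smul_right, hw, mul_add] at hupper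
  rw [add_sub_right_comm, inner_add_right, inner_neg_right, real_inner_smul_right] at hlower
  linarith

theorem norm_sq_le_mul_inner (h : HasLipschitzGradient F F' L) (hL : 0 < L)
    (hF : ConvexOn ℝ Set.univ F) (x y : E) :
    ‖F' x - F' y‖ ^ 2 ≤ L * ⟪F' x - F' y, x - y⟫ := by
  have hsub (z : E) : IsSubgradientAt F z (F' z) :=
    isSubgradientAt_of_hasGradientAt_s10 (h.hasGradientAt z) hF
  have hxy := h.add_inner_add_norm_sq_le hL (hsub x) y
  have hyx := h.add_inner_add_norm_sq_le hL (hsub y) x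
  rw [norm_sub_rev] at hxy
  have hhalf : ‖F' x - F' y‖ ^ 2 / L
      = ‖F' x - F' y‖ ^ 2 / (2 * L) + ‖F' x - F' y‖ ^ 2 / (2 * L) := by
    field_simp
    ring
  rw [← div_le_iff₀' hL, hhalf]
  simp only [inner_sub_left, inner_sub_right] at hxy hyx ⊢
  linarith

end HasLipschitzGradient

end Gradient

section StepError

variable {E : Type*} [NormedAddCommGroup E] [InnerProductSpace ℝ E]

/-- The differences between one Davis–Yin step and a fixed point: `a` and `b` stand for
`z_G - z*` and `z_J - z*`, and `g`, `f`, `j` for the corresponding differences of the elements of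
`∂G`, `∇F̃`, `∂J`. Only the monotonicity and cocoercivity relations used in the convergence analysis
are recorded. The error of `r` is `a + γ • g` before the step and `b + γ • g` after it. -/
structure DavisYinError (γ L μF μG μJ : ℝ) (a b g f j : E) : Prop where
  sub_eq : a - b = γ • (g + j + f)
  le_inner_g : μG * ‖a‖ ^ 2 ≤ ⟪g, a⟫
  le_inner_j : μJ * ‖b‖ ^ 2 ≤ ⟪j, b⟫
  le_inner_f : μF * ‖a‖ ^ 2 ≤ ⟪f, a⟫
  norm_f_sq_le : ‖f‖ ^ 2 ≤ L * ⟪f, a⟫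

/-- The decrease of the squared error `‖r - r*‖²` in one Davis–Yin step, in the notation of
`DavisYinError`. -/
def errorDecrease (γ : ℝ) (a b g : E) : ℝ :=
  ‖a + γ • g‖ ^ 2 - ‖b + γ • g‖ ^ 2

theorem errorDecrease_eq {γ : ℝ} {a b g f j : E} (h : a - b = γ • (g + j + f)) :
    errorDecrease γ a b g =
      2 * γ * (⟪g, a⟫ + ⟪j, b⟫ + ⟪f, a⟫) + γ ^ 2 * (‖g + j‖ ^ 2 - ‖f‖ ^ 2) := by
  obtain rfl : b = a - γ • (g + j + f) := by rw [← h, sub_sub_cancel]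
  simp only [errorDecrease, ← real_inner_self_eq_norm_sq, inner_add_left, inner_add_right,
    inner_sub_left, inner_sub_right, real_inner_smul_left, real_inner_smul_right]
  rw [real_inner_comm g a, real_inner_comm f a, real_inner_comm j a, real_inner_comm g f,
    real_inner_comm g j, real_inner_comm f j]
  ring

namespace DavisYinError

variable {γ L μF μG μJ M : ℝ} {a b g f j : E}

theorem le_errorDecrease (h : DavisYinError γ L μF μG μJ a b g f j) (hγ : 0 ≤ γ) :
    2 * γ * (μG * ‖a‖ ^ 2 + μJ * ‖b‖ ^ 2) + γ * (2 - γ * L) * ⟪f, a⟫ + γ ^ 2 * ‖g + j‖ ^ 2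
      ≤ errorDecrease γ a b g := by
  rw [errorDecrease_eq h.sub_eq]
  calc _ = 2 * γ * (μG * ‖a‖ ^ 2 + μJ * ‖b‖ ^ 2 + ⟪f, a⟫)
        + γ ^ 2 * (‖g + j‖ ^ 2 - L * ⟪f, a⟫) := by ring
    _ ≤ _ := by gcongr; exacts [h.le_inner_g, h.le_inner_j, h.norm_f_sq_le]

theorem inner_f_nonneg (h : DavisYinError γ L μF μG μJ a b g f j) (hμF : 0 ≤ μF) :
    0 ≤ ⟪f, a⟫ :=
  le_trans (by positivity) h.le_inner_f

theorem mul_norm_add_sq_le (h : DavisYinError γ L μF μG μJ a b g f j) (hγ : 0 ≤ γ)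
    (hγL : γ * L ≤ 2) (hμF : 0 ≤ μF) (hμG : 0 ≤ μG) (hμJ : 0 ≤ μJ) :
    γ ^ 2 * ‖g + j‖ ^ 2 ≤ errorDecrease γ a b g := by
  have hf := h.inner_f_nonneg hμF
  have : 0 ≤ 2 - γ * L := sub_nonneg.2 hγL
  refine le_trans ?_ (h.le_errorDecrease hγ)
  exact le_add_of_nonneg_left (by positivity)

theorem errorDecrease_nonneg (h : DavisYinError γ L μF μG μJ a b g f j) (hγ : 0 ≤ γ)
    (hγL : γ * L ≤ 2) (hμF : 0 ≤ μF) (hμG : 0 ≤ μG) (hμJ : 0 ≤ μJ) :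
    0 ≤ errorDecrease γ a b g :=
  le_trans (by positivity) (h.mul_norm_add_sq_le hγ hγL hμF hμG hμJ)

theorem mul_norm_sub_sq_le (h : DavisYinError γ L μF μG μJ a b g f j) (hγ : 0 ≤ γ) (hL : 0 ≤ L)
    (hγL : γ * L ≤ 2) (hμF : 0 ≤ μF) (hμG : 0 ≤ μG) (hμJ : 0 ≤ μJ) :
    (2 - γ * L) * ‖a - b‖ ^ 2 ≤ 4 * errorDecrease γ a b g := by
  have hf := h.inner_f_nonneg hμF
  have : 0 ≤ 2 - γ * L := sub_nonneg.2 hγL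
  have hδ2 : 2 - γ * L ≤ 2 := sub_le_self _ (by positivity)
  have hsub : ‖a - b‖ ^ 2 ≤ 2 * (γ ^ 2 * ‖g + j‖ ^ 2 + γ * (γ * L) * ⟪f, a⟫) :=
    calc ‖a - b‖ ^ 2 = γ ^ 2 * ‖(g + j) + f‖ ^ 2 := by
          rw [h.sub_eq, norm_smul, mul_pow, Real.norm_eq_abs, sq_abs]
      _ ≤ γ ^ 2 * (2 * (‖g + j‖ ^ 2 + L * ⟪f, a⟫)) := by
          gcongr
          exact (norm_add_sq_le_two_mul _ _).trans (by gcongr; exact h.norm_f_sq_le)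
      _ = _ := by ring
  calc (2 - γ * L) * ‖a - b‖ ^ 2
      ≤ (2 - γ * L) * (2 * (γ ^ 2 * ‖g + j‖ ^ 2 + γ * (γ * L) * ⟪f, a⟫)) := by gcongr
    _ = 2 * ((2 - γ * L) * (γ ^ 2 * ‖g + j‖ ^ 2) + γ * L * (γ * (2 - γ * L) * ⟪f, a⟫)) := by ring
    _ ≤ 2 * (2 * (γ ^ 2 * ‖g + j‖ ^ 2) + 2 * (γ * (2 - γ * L) * ⟪f, a⟫)) := by gcongr
    _ = 4 * (γ * (2 - γ * L) * ⟪f, a⟫ + γ ^ 2 * ‖g + j‖ ^ 2) := by ring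
    _ ≤ 4 * errorDecrease γ a b g := by
        gcongr
        refine le_trans ?_ (h.le_errorDecrease hγ)
        rw [add_assoc]
        exact le_add_of_nonneg_left (by positivity)

/- The strong convexity of `J` acts at `b`, so its contribution is moved to `a` at the cost of
`‖a - b‖²`. -/
theorem mul_norm_sq_le (h : DavisYinError γ L μF μG μJ a b g f j) (hγ : 0 ≤ γ) (hL : 0 ≤ L)
    (hγL : γ * L ≤ 2) (hμF : 0 ≤ μF) (hμG : 0 ≤ μG) (hμJ : 0 ≤ μJ) :
    γ * (2 - γ * L) * (μF + μG + μJ) * ‖a‖ ^ 2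
      ≤ (2 + 8 * γ * μJ) * errorDecrease γ a b g := by
  have hf := h.inner_f_nonneg hμF
  have : 0 ≤ 2 - γ * L := sub_nonneg.2 hγL
  have hδ2 : 2 - γ * L ≤ 2 := sub_le_self _ (by positivity)
  have hF : γ * (2 - γ * L) * (μF * ‖a‖ ^ 2) ≤ γ * (2 - γ * L) * ⟪f, a⟫ := by
    gcongr
    exact h.le_inner_f
  have hG : γ * (2 - γ * L) * (μG * ‖a‖ ^ 2) ≤ γ * 2 * (μG * ‖a‖ ^ 2) := by gcongr
  have hJ : γ * (2 - γ * L) * (μJ * ‖a‖ ^ 2)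
      ≤ 8 * γ * μJ * errorDecrease γ a b g + 4 * γ * (μJ * ‖b‖ ^ 2) :=
    calc γ * (2 - γ * L) * (μJ * ‖a‖ ^ 2)
        ≤ γ * (2 - γ * L) * (μJ * (2 * (‖a - b‖ ^ 2 + ‖b‖ ^ 2))) := by
          gcongr
          simpa using norm_add_sq_le_two_mul (a - b) b
      _ = 2 * γ * μJ * ((2 - γ * L) * ‖a - b‖ ^ 2 + (2 - γ * L) * ‖b‖ ^ 2) := by ring
      _ ≤ 2 * γ * μJ * (4 * errorDecrease γ a b g + 2 * ‖b‖ ^ 2) := by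
          gcongr ?_ * (?_ + ?_ * ?_)
          exact h.mul_norm_sub_sq_le hγ hL hγL hμF hμG hμJ
      _ = _ := by ring
  have hdecrease := h.le_errorDecrease hγ
  have hg_nonneg : 0 ≤ γ * (μG * ‖a‖ ^ 2) := by positivity
  have hf_nonneg : 0 ≤ γ * (2 - γ * L) * ⟪f, a⟫ := by positivity
  have hgj_nonneg : 0 ≤ γ ^ 2 * ‖g + j‖ ^ 2 := by positivity
  linarith

theorem norm_add_smul_sq_le_of_norm_j_le (h : DavisYinError γ L μF μG μJ a b g f j) (hγ : 0 ≤ γ)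
    (hγL : γ * L ≤ 2) (hμF : 0 ≤ μF) (hμG : 0 ≤ μG) (hμJ : 0 ≤ μJ) (hj : ‖j‖ ≤ M * ‖b‖) :
    ‖a + γ • g‖ ^ 2 ≤ 2 * (1 + γ * M) ^ 2 * ‖b‖ ^ 2 + 3 * errorDecrease γ a b g := by
  have hsplit : b + γ • g = (b + γ • -j) + γ • (g + j) := by module
  have hafter : ‖b + γ • g‖ ^ 2
      ≤ 2 * ((1 + γ * M) ^ 2 * ‖b‖ ^ 2 + errorDecrease γ a b g) :=
    calc ‖b + γ • g‖ ^ 2 ≤ 2 * (‖b + γ • -j‖ ^ 2 + ‖γ • (g + j)‖ ^ 2) := by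
          rw [hsplit]
          exact norm_add_sq_le_two_mul _ _
      _ ≤ _ := by
          gcongr
          · exact norm_add_smul_sq_le_of_norm_le hγ (by rwa [norm_neg])
          · rw [norm_smul, mul_pow, Real.norm_eq_abs, sq_abs]
            exact h.mul_norm_add_sq_le hγ hγL hμF hμG hμJ
  have hbefore : ‖a + γ • g‖ ^ 2 = ‖b + γ • g‖ ^ 2 + errorDecrease γ a b g :=
    (add_sub_cancel _ _).symm
  linarith

theorem exists_norm_sq_le_mul_errorDecrease (hγ : 0 < γ) (hL : 0 ≤ L) (hγL : γ * L < 2)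
    (hμF : 0 ≤ μF) (hμG : 0 ≤ μG) (hμJ : 0 ≤ μJ) (hμ : 0 < μF + μG + μJ) :
    ∃ C : ℝ, 0 ≤ C ∧ ∀ a b g f j : E, DavisYinError γ L μF μG μJ a b g f j →
      ‖a‖ ^ 2 ≤ C * errorDecrease γ a b g ∧ ‖b‖ ^ 2 ≤ C * errorDecrease γ a b g := by
  have hδ : 0 < 2 - γ * L := sub_pos.2 hγL
  set Ca := (2 + 8 * γ * μJ) / (γ * (2 - γ * L) * (μF + μG + μJ))
  set Cd := 4 / (2 - γ * L)
  have hCa : 0 ≤ Ca := by positivity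
  have hCd : 0 ≤ Cd := by positivity
  refine ⟨2 * (Ca + Cd), mul_nonneg zero_le_two (add_nonneg hCa hCd), fun a b g f j h => ?_⟩
  have hD := h.errorDecrease_nonneg hγ.le hγL.le hμF hμG hμJ
  have ha : ‖a‖ ^ 2 ≤ Ca * errorDecrease γ a b g := by
    rw [div_mul_eq_mul_div, le_div_iff₀' (by positivity)]
    exact h.mul_norm_sq_le hγ.le hL hγL.le hμF hμG hμJ
  have hd : ‖a - b‖ ^ 2 ≤ Cd * errorDecrease γ a b g := by
    rw [div_mul_eq_mul_div, le_div_iff₀' hδ]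
    exact h.mul_norm_sub_sq_le hγ.le hL hγL.le hμF hμG hμJ
  have hb : ‖b‖ ^ 2 ≤ 2 * (‖a‖ ^ 2 + ‖a - b‖ ^ 2) := by
    simpa [norm_sub_rev b a] using norm_add_sq_le_two_mul a (b - a)
  have hCaD : 0 ≤ Ca * errorDecrease γ a b g := mul_nonneg hCa hD
  have hCdD : 0 ≤ Cd * errorDecrease γ a b g := mul_nonneg hCd hD
  constructor <;> linarith

theorem exists_norm_add_smul_sq_le_mul_errorDecrease (M : ℝ) (hγ : 0 < γ) (hL : 0 ≤ L)
    (hγL : γ * L < 2) (hμF : 0 ≤ μF) (hμG : 0 ≤ μG) (hμJ : 0 ≤ μJ) (hμ : 0 < μF + μG + μJ) :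
    ∃ K : ℝ, 1 ≤ K ∧ ∀ a b g f j : E, DavisYinError γ L μF μG μJ a b g f j →
      (‖g‖ ≤ M * ‖a‖ ∨ ‖j‖ ≤ M * ‖b‖) →
      ‖a + γ • g‖ ^ 2 ≤ K * errorDecrease γ a b g := by
  obtain ⟨C, hC, hab⟩ := exists_norm_sq_le_mul_errorDecrease (E := E) hγ hL hγL hμF hμG hμJ hμ
  have hM : 0 ≤ (1 + γ * M) ^ 2 * C := by positivity
  refine ⟨2 * (1 + γ * M) ^ 2 * C + 3, by linarith, fun a b g f j h hLip => ?_⟩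
  have hD := h.errorDecrease_nonneg hγ.le hγL.le hμF hμG hμJ
  obtain ⟨ha, hb⟩ := hab a b g f j h
  rcases hLip with hg | hj
  · calc ‖a + γ • g‖ ^ 2 ≤ (1 + γ * M) ^ 2 * ‖a‖ ^ 2 :=
          norm_add_smul_sq_le_of_norm_le hγ.le hg
      _ ≤ (1 + γ * M) ^ 2 * (C * errorDecrease γ a b g) := by gcongr
      _ = (1 + γ * M) ^ 2 * C * errorDecrease γ a b g := by ring
      _ ≤ (2 * (1 + γ * M) ^ 2 * C + 3) * errorDecrease γ a b g := by
          gcongr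
          linarith
  · calc ‖a + γ • g‖ ^ 2 ≤ 2 * (1 + γ * M) ^ 2 * ‖b‖ ^ 2 + 3 * errorDecrease γ a b g :=
          h.norm_add_smul_sq_le_of_norm_j_le hγ.le hγL.le hμF hμG hμJ hj
      _ ≤ 2 * (1 + γ * M) ^ 2 * (C * errorDecrease γ a b g) + 3 * errorDecrease γ a b g := by
          gcongr
      _ = (2 * (1 + γ * M) ^ 2 * C + 3) * errorDecrease γ a b g := by ring

theorem exists_contraction (M : ℝ) (hγ : 0 < γ) (hL : 0 ≤ L) (hγL : γ * L < 2) (hμF : 0 ≤ μF)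
    (hμG : 0 ≤ μG) (hμJ : 0 ≤ μJ) (hμ : 0 < μF + μG + μJ) :
    ∃ ρ : ℝ, 0 < ρ ∧ ρ ≤ 1 ∧ ∀ a b g f j : E, DavisYinError γ L μF μG μJ a b g f j →
      (‖g‖ ≤ M * ‖a‖ ∨ ‖j‖ ≤ M * ‖b‖) →
      ‖b + γ • g‖ ^ 2 ≤ (1 - ρ) * ‖a + γ • g‖ ^ 2 := by
  obtain ⟨K, hK, hbound⟩ :=
    exists_norm_add_smul_sq_le_mul_errorDecrease (E := E) M hγ hL hγL hμF hμG hμJ hμ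
  have hK0 : 0 < K := one_pos.trans_le hK
  refine ⟨K⁻¹, inv_pos.2 hK0, inv_le_one_of_one_le₀ hK, fun a b g f j h hLip => ?_⟩
  have hle : K⁻¹ * ‖a + γ • g‖ ^ 2 ≤ ‖a + γ • g‖ ^ 2 - ‖b + γ • g‖ ^ 2 :=
    (inv_mul_le_iff₀ hK0).2 (hbound a b g f j h hLip)
  linarith

end DavisYinError

end StepError

section DavisYinStep

variable {E : Type*} [NormedAddCommGroup E] [InnerProductSpace ℝ E]

/-- One step `r ↦ r'` of the Davis–Yin iteration with step size `γ` for `F + G + J`, where `F'` is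
the gradient of `F`; `zG` and `zJ` are the two proximal points computed on the way. -/
structure IsDavisYinStep (γ : ℝ) (F' : E → E) (G J : E → ℝ) (r zG zJ r' : E) : Prop where
  isProxPt_left : IsProxPt γ G r zG
  isProxPt_right : IsProxPt γ J ((2 : ℝ) • zG - r - γ • F' zG) zJ
  eq_add_sub : r' = zJ + r - zG

namespace IsDavisYinStep

variable {γ : ℝ} {F' : E → E} {G J : E → ℝ} {r zG zJ r' z u : E}

theorem isSubgradientAt_left (h : IsDavisYinStep γ F' G J r zG zJ r') (hγ : 0 < γ)
    (hG : ConvexOn ℝ Set.univ G) : IsSubgradientAt G zG (γ⁻¹ • (r - zG)) :=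
  h.isProxPt_left.isSubgradientAt_s10 hγ hG

theorem isSubgradientAt_right (h : IsDavisYinStep γ F' G J r zG zJ r') (hγ : 0 < γ)
    (hJ : ConvexOn ℝ Set.univ J) :
    IsSubgradientAt J zJ (γ⁻¹ • (zG - zJ - (r - zG)) - F' zG) := by
  have hsub := h.isProxPt_right.isSubgradientAt_s10 hγ hJ
  have heq : (2 : ℝ) • zG - r - γ • F' zG - zJ = (zG - zJ - (r - zG)) - γ • F' zG := by module
  rwa [heq, smul_sub γ⁻¹, inv_smul_smul₀ hγ.ne'] at hsub

theorem davisYinError [CompleteSpace E] {F : E → ℝ} {L μF μG μJ : ℝ}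
    (h : IsDavisYinStep γ F' G J r zG zJ r') (hγ : 0 < γ) (hF' : HasLipschitzGradient F F' L)
    (hL : 0 < L) (hμF : 0 ≤ μF) (hμG : 0 ≤ μG) (hμJ : 0 ≤ μJ)
    (hF : StrongConvexOn Set.univ μF F) (hG : StrongConvexOn Set.univ μG G)
    (hJ : StrongConvexOn Set.univ μJ J) (hu : IsSubgradientAt G z u)
    (hu' : IsSubgradientAt J z (-F' z - u)) :
    DavisYinError γ L μF μG μJ (zG - z) (zJ - z) (γ⁻¹ • (r - zG) - u) (F' zG - F' z)
      (γ⁻¹ • (zG - zJ - (r - zG)) - F' zG - (-F' z - u)) := by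
  have hFconv : ConvexOn ℝ Set.univ F := strongConvexOn_zero.1 (hF.mono hμF)
  have hgrad (x : E) : IsSubgradientAt F x (F' x) :=
    isSubgradientAt_of_hasGradientAt_s10 (hF'.hasGradientAt x) hFconv
  have hleft := h.isSubgradientAt_left hγ (strongConvexOn_zero.1 (hG.mono hμG))
  have hright := h.isSubgradientAt_right hγ (strongConvexOn_zero.1 (hJ.mono hμJ))
  refine ⟨?_, hleft.mul_norm_sq_le_inner hu hG, hright.mul_norm_sq_le_inner hu' hJ,
    (hgrad zG).mul_norm_sq_le_inner (hgrad z) hF, hF'.norm_sq_le_mul_inner hL hFconv zG z⟩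
  have hsum : γ⁻¹ • (r - zG) - u + (γ⁻¹ • (zG - zJ - (r - zG)) - F' zG - (-F' z - u))
      + (F' zG - F' z) = γ⁻¹ • (zG - zJ) := by module
  rw [hsum, smul_inv_smul₀ hγ.ne', sub_sub_sub_cancel_right]

end IsDavisYinStep

end DavisYinStep

theorem davis_yin_linear_convergence_general
    {E : Type*} [NormedAddCommGroup E] [InnerProductSpace ℝ E] [CompleteSpace E]
    {F G J : E → ℝ} {F' : E → E} {L μF μG μJ γ : ℝ} {z u : E}
    (hF' : HasLipschitzGradient F F' L) (hL : 0 < L)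
    (hμF : 0 ≤ μF) (hμG : 0 ≤ μG) (hμJ : 0 ≤ μJ) (hμ : 0 < μF + μG + μJ)
    (hF : StrongConvexOn Set.univ μF F) (hG : StrongConvexOn Set.univ μG G)
    (hJ : StrongConvexOn Set.univ μJ J)
    (hsmooth : (∃ G' M, HasLipschitzGradient G G' M) ∨ ∃ J' M, HasLipschitzGradient J J' M)
    (hu : IsSubgradientAt G z u) (hu' : IsSubgradientAt J z (-F' z - u))
    (hγ : 0 < γ) (hγL : γ < 2 / L) :
    ∃ ρ : ℝ, 0 < ρ ∧ ρ ≤ 1 ∧ ∀ r zG zJ : ℕ → E,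
      (∀ k, IsDavisYinStep γ F' G J (r k) (zG (k + 1)) (zJ (k + 1)) (r (k + 1))) →
      ∀ k, ‖r k - (z + γ • u)‖ ^ 2 ≤ (1 - ρ) ^ k * ‖r 0 - (z + γ • u)‖ ^ 2 := by
  obtain ⟨M, hM⟩ : ∃ M, (∀ x v, IsSubgradientAt G x v → ‖v - u‖ ≤ M * ‖x - z‖) ∨
      (∀ x v, IsSubgradientAt J x v → ‖v - (-F' z - u)‖ ≤ M * ‖x - z‖) := by
    rcases hsmooth with ⟨G', M, hG'⟩ | ⟨J', M, hJ'⟩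
    · exact ⟨M, .inl fun _ _ hv => hG'.norm_subgradient_sub_le hv hu⟩
    · exact ⟨M, .inr fun _ _ hv => hJ'.norm_subgradient_sub_le hv hu'⟩
  obtain ⟨ρ, hρ0, hρ1, hcontract⟩ := DavisYinError.exists_contraction (E := E) M hγ hL.le
    ((lt_div_iff₀ hL).1 hγL) hμF hμG hμJ hμ
  refine ⟨ρ, hρ0, hρ1, fun r zG zJ hstep k => ?_⟩
  refine le_geom (u := fun k => ‖r k - (z + γ • u)‖ ^ 2) (sub_nonneg.2 hρ1) k fun k _ => ?_
  have h := hstep k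
  have hLip := hM.imp (fun hM => hM _ _ (h.isSubgradientAt_left hγ
    (strongConvexOn_zero.1 (hG.mono hμG)))) (fun hM => hM _ _ (h.isSubgradientAt_right hγ
    (strongConvexOn_zero.1 (hJ.mono hμJ))))
  have hle := hcontract _ _ _ _ _ (h.davisYinError hγ hF' hL hμF hμG hμJ hF hG hJ hu hu') hLip
  rwa [sub_add_smul_inv_smul_sub_sub hγ.ne', sub_add_smul_inv_smul_sub_sub hγ.ne',
    add_sub_cancel_left, ← h.eq_add_sub] at hle

/-- Lemma 2: linear convergence of the Davis–Yin algorithm (r-form) when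
`μ_F̃ + μ_G + μ_J > 0` and `G` or `J` is smooth. -/
theorem davis_yin_linear_convergence
    {𝒵 : Type*}
    [NormedAddCommGroup 𝒵] [InnerProductSpace ℝ 𝒵] [FiniteDimensional ℝ 𝒵]
    (Ft G J : 𝒵 → ℝ) (Ft' : 𝒵 → 𝒵) (L_Ft : ℝ)
    (hLFt : 0 < L_Ft)
    (hFtconv : ConvexOn ℝ Set.univ Ft)
    (hGconv : ConvexOn ℝ Set.univ G)
    (hJconv : ConvexOn ℝ Set.univ J)
    (hFtgrad : ∀ z, HasGradientAt Ft (Ft' z) z)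
    (hFtlip : ∀ z z', ‖Ft' z - Ft' z'‖ ≤ L_Ft * ‖z - z'‖)
    -- strong convexity
    (μFt μG μJ : ℝ) (hμFt : 0 ≤ μFt) (hμG : 0 ≤ μG) (hμJ : 0 ≤ μJ)
    (hμ : 0 < μFt + μG + μJ)
    (hFtsc : ConvexOn ℝ Set.univ fun z => Ft z - μFt / 2 * ‖z‖ ^ 2)
    (hGsc : ConvexOn ℝ Set.univ fun z => G z - μG / 2 * ‖z‖ ^ 2)
    (hJsc : ConvexOn ℝ Set.univ fun z => J z - μJ / 2 * ‖z‖ ^ 2)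
    -- G is smooth or J is smooth
    (hsmooth :
      (∃ (G' : 𝒵 → 𝒵) (L_G : ℝ), 0 < L_G ∧ (∀ z, HasGradientAt G (G' z) z) ∧
        ∀ z z', ‖G' z - G' z'‖ ≤ L_G * ‖z - z'‖) ∨
      (∃ (J' : 𝒵 → 𝒵) (L_J : ℝ), 0 < L_J ∧ (∀ z, HasGradientAt J (J' z) z) ∧
        ∀ z z', ‖J' z - J' z'‖ ≤ L_J * ‖z - z'‖))
    -- z* is the (unique) minimizer, with (unique) dual certificate u_G*
    (zstar : 𝒵)
    (hzstar : ∀ y, Ft zstar + G zstar + J zstar ≤ Ft y + G y + J y)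
    (uGstar : 𝒵)
    (huGstar : IsSubgradientAt G zstar uGstar)
    (huGstar' : IsSubgradientAt J zstar (-(Ft' zstar) - uGstar))
    -- constant stepsize
    (γ : ℝ) (hγ0 : 0 < γ) (hγ2 : γ < 2 / L_Ft)
    -- r* = z* + γ u_G*
    (rstar : 𝒵) (hrstar : rstar = zstar + γ • uGstar)
    -- Davis–Yin iterates, r-form
    (r zG zJ : ℕ → 𝒵)
    (hzG : ∀ k, IsProxPt γ G (r k) (zG (k+1)))
    (hzJ : ∀ k, IsProxPt γ J
      ((2:ℝ) • zG (k+1) - r k - γ • Ft' (zG (k+1))) (zJ (k+1)))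
    (hr : ∀ k, r (k+1) = zJ (k+1) + r k - zG (k+1)) :
    ∃ ρ : ℝ, 0 < ρ ∧ ρ ≤ 1 ∧ ∀ k : ℕ,
      ‖r k - rstar‖^2 ≤ (1 - ρ)^k * ‖r 0 - rstar‖^2 := by
  obtain ⟨ρ, hρ0, hρ1, hrate⟩ := davis_yin_linear_convergence_general ⟨hFtgrad, hFtlip⟩ hLFt hμFt
    hμG hμJ hμ (strongConvexOn_iff_convex.2 hFtsc) (strongConvexOn_iff_convex.2 hGsc)
    (strongConvexOn_iff_convex.2 hJsc)
    (hsmooth.imp (fun ⟨G', M, _, hG', hlip⟩ => ⟨G', M, hG', hlip⟩)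
      fun ⟨J', M, _, hJ', hlip⟩ => ⟨J', M, hJ', hlip⟩) huGstar huGstar' hγ0 hγ2
  exact ⟨ρ, hρ0, hρ1, hrstar ▸ hrate r zG zJ fun k => ⟨hzG k, hzJ k, hr k⟩⟩
end
end

section
/- Asymptotics of the accelerated stepsize sequence: Let a ≥ 0 and b ≥ 0 with a + b > 0, let γ₀ > 0, and define the sequence (γ_k) by the recurrence γ_{k+1} = (−γ_k²·a + γ_k·√((γ_k·a)² + 1 + 2γ_k·b)) / (1 + 2γ_k·b) for all k ≥ 0. Then k·γ_k → 1/(a + b) as k → ∞; in particular γ_k = O(1/k) and γ_{k+1}/γ_k → 1. -/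
open Filter Topology

/-! Rationalizing the numerator turns the recurrence into an iteration for `u k = (γ k)⁻¹`, namely
`u (k + 1) = a + √((u k + b) ^ 2 + (a ^ 2 - b ^ 2))`. When `a + b > 0` the iterated map is
continuous and moves every `x > 0` strictly to the right, which forces `u k → ∞`. Its displacement
tends to `a + b` at infinity, so `u k / k → a + b` by Cesàro averaging of the increments.
-/

theorem tendsto_atTop_of_lt_map {α : Type*} [ConditionallyCompleteLinearOrder α]
    [TopologicalSpace α] [OrderTopology α] {f : α → α} {u : ℕ → α}
    (hu : ∀ k, u (k + 1) = f (u k)) (hlt : ∀ x, u 0 ≤ x → x < f x)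
    (hf : ContinuousOn f (Set.Ici (u 0))) : Tendsto u atTop atTop := by
  have hge : ∀ k, u 0 ≤ u k := by
    intro k
    induction k with
    | zero => exact le_rfl
    | succ k ih => exact ih.trans (hu k ▸ (hlt _ ih).le)
  have hmono : Monotone u := monotone_nat_of_le_succ fun k => hu k ▸ (hlt _ (hge k)).le
  refine (tendsto_atTop_of_monotone hmono).resolve_right ?_
  rintro ⟨l, hl⟩
  have hl0 : u 0 ≤ l := hmono.ge_of_tendsto hl 0
  have hfl : Tendsto (fun k => f (u k)) atTop (𝓝 (f l)) :=
    (hf l hl0).tendsto.comp (tendsto_nhdsWithin_iff.2 ⟨hl, .of_forall hge⟩)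
  have hsucc : Tendsto (fun k => f (u k)) atTop (𝓝 l) :=
    ((tendsto_add_atTop_iff_nat 1).2 hl).congr hu
  exact (hlt l hl0).ne (tendsto_nhds_unique hsucc hfl)

theorem tendsto_inv_natCast_smul_of_tendsto_succ_sub {E : Type*} [NormedAddCommGroup E]
    [NormedSpace ℝ E] {u : ℕ → E} {l : E}
    (h : Tendsto (fun k => u (k + 1) - u k) atTop (𝓝 l)) :
    Tendsto (fun k : ℕ => (k⁻¹ : ℝ) • u k) atTop (𝓝 l) := by
  have hinit : Tendsto (fun k : ℕ => (k⁻¹ : ℝ) • u 0) atTop (𝓝 0) := by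
    simpa using (tendsto_inv_atTop_nhds_zero_nat (𝕜 := ℝ)).smul_const (u 0)
  simpa only [Finset.sum_range_sub, ← smul_add, sub_add_cancel, add_zero]
    using h.cesaro_smul.add hinit

theorem tendsto_succ_div_of_tendsto_natCast_mul {𝕜 : Type*} [Semifield 𝕜] [CharZero 𝕜]
    [TopologicalSpace 𝕜] [IsTopologicalSemiring 𝕜] [ContinuousInv₀ 𝕜] [ContinuousSMul ℚ≥0 𝕜]
    {x : ℕ → 𝕜} {c : 𝕜} (hc : c ≠ 0) (h : Tendsto (fun k : ℕ => (k : 𝕜) * x k) atTop (𝓝 c)) :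
    Tendsto (fun k => x (k + 1) / x k) atTop (𝓝 1) := by
  have hsucc : Tendsto (fun k : ℕ => ((k + 1 : ℕ) : 𝕜) * x (k + 1)) atTop (𝓝 c) :=
    (tendsto_add_atTop_iff_nat 1).2 h
  have hratio := (hsucc.div h hc).mul (tendsto_natCast_div_add_atTop (1 : 𝕜))
  rw [div_self hc, one_mul] at hratio
  refine hratio.congr' ?_
  filter_upwards [eventually_ne_atTop 0] with k hk
  have hk0 : (k : 𝕜) ≠ 0 := Nat.cast_ne_zero.2 hk
  have hk1 : (k : 𝕜) + 1 ≠ 0 := Nat.cast_add_one_ne_zero k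
  simp only [Pi.div_apply, Nat.cast_add_one]
  rw [mul_div_mul_comm, mul_right_comm, div_mul_div_cancel₀ hk0, div_self hk1, one_mul]

theorem tendsto_sqrt_sq_add_sub_self_atTop (c : ℝ) :
    Tendsto (fun x => √(x ^ 2 + c) - x) atTop (𝓝 0) := by
  have hden : Tendsto (fun x => √(x ^ 2 + c) + x) atTop atTop :=
    tendsto_atTop_mono (fun x => le_add_of_nonneg_left (Real.sqrt_nonneg _)) tendsto_id
  refine (hden.const_div_atTop c).congr' ?_
  have hrad : ∀ᶠ x : ℝ in atTop, 0 ≤ x ^ 2 + c :=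
    (tendsto_atTop_add_const_right _ c (tendsto_pow_atTop two_ne_zero)).eventually_ge_atTop 0
  filter_upwards [hden.eventually_gt_atTop 0, hrad] with x hx hxc
  rw [div_eq_iff hx.ne']
  linear_combination -Real.sq_sqrt hxc

/-- The stepsize update `γ_k ↦ γ_{k+1}` of the accelerated algorithm, equation (9) of the paper. -/
noncomputable def acceleratedStep (a b g : ℝ) : ℝ :=
  (-(g ^ 2 * a) + g * √((g * a) ^ 2 + 1 + 2 * g * b)) / (1 + 2 * g * b)

/-- The stepsize update in terms of reciprocals, `1 / γ_k ↦ 1 / γ_{k+1}`. The radicand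
`x ^ 2 + 2 * b * x + a ^ 2` is written as a completed square to expose the growth at infinity. -/
noncomputable def reciprocalStep (a b x : ℝ) : ℝ :=
  a + √((x + b) ^ 2 + (a ^ 2 - b ^ 2))

section Step

variable {a b g x : ℝ}

theorem inv_acceleratedStep (hab : 0 ≤ a + b) (hg : 0 < g) (hden : 1 + 2 * g * b ≠ 0) :
    (acceleratedStep a b g)⁻¹ = reciprocalStep a b g⁻¹ := by
  set r := √((g⁻¹ + b) ^ 2 + (a ^ 2 - b ^ 2))
  have hrad : 0 ≤ (g⁻¹ + b) ^ 2 + (a ^ 2 - b ^ 2) := by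
    have : 0 ≤ (a + b) * g⁻¹ := by positivity
    linarith [sq_nonneg (g⁻¹ - a)]
  have hsqrt : √((g * a) ^ 2 + 1 + 2 * g * b) = g * r := by
    rw [← Real.sqrt_sq hg.le, ← Real.sqrt_mul (sq_nonneg g), Real.sqrt_sq hg.le]
    congr 1
    field_simp
    ring
  have hconj : g ^ 2 * (r - a) * (a + r) = 1 + 2 * g * b := by
    have hr : r ^ 2 = (g⁻¹ + b) ^ 2 + (a ^ 2 - b ^ 2) := Real.sq_sqrt hrad
    linear_combination g ^ 2 * hr + (g * g⁻¹ + 1 + 2 * g * b) * mul_inv_cancel₀ hg.ne'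
  calc (acceleratedStep a b g)⁻¹ = (1 + 2 * g * b) / (g ^ 2 * (r - a)) := by
        rw [acceleratedStep, hsqrt, inv_div]
        ring
    _ = a + r := by
        rw [← hconj] at hden ⊢
        exact mul_div_cancel_left₀ _ (left_ne_zero_of_mul hden)

theorem lt_reciprocalStep (hab : 0 < a + b) (hx : 0 < x) : x < reciprocalStep a b x := by
  have hsq : (x - a) ^ 2 < (x + b) ^ 2 + (a ^ 2 - b ^ 2) := by
    linarith [mul_pos hab hx]
  exact sub_lt_iff_lt_add'.1 (Real.lt_sqrt_of_sq_lt hsq)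

theorem acceleratedStep_pos (hab : 0 < a + b) (hg : 0 < g) (hden : 1 + 2 * g * b ≠ 0) :
    0 < acceleratedStep a b g := by
  rw [← inv_pos, inv_acceleratedStep hab.le hg hden]
  exact (inv_pos.2 hg).trans (lt_reciprocalStep hab (inv_pos.2 hg))

theorem continuous_reciprocalStep (a b : ℝ) : Continuous (reciprocalStep a b) := by
  unfold reciprocalStep
  fun_prop

theorem tendsto_reciprocalStep_sub_self_atTop (a b : ℝ) :
    Tendsto (fun x => reciprocalStep a b x - x) atTop (𝓝 (a + b)) := by
  have h := ((tendsto_sqrt_sq_add_sub_self_atTop (a ^ 2 - b ^ 2)).comp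
    (tendsto_atTop_add_const_right _ b tendsto_id)).const_add (a + b)
  rw [add_zero] at h
  refine h.congr fun x => ?_
  simp only [reciprocalStep, Function.comp_apply, id]
  ring

theorem tendsto_inv_natCast_mul_of_eq_reciprocalStep (hab : 0 < a + b) {u : ℕ → ℝ}
    (hu0 : 0 < u 0) (hu : ∀ k, u (k + 1) = reciprocalStep a b (u k)) :
    Tendsto (fun k : ℕ => (k : ℝ)⁻¹ * u k) atTop (𝓝 (a + b)) := by
  have hu_top : Tendsto u atTop atTop :=
    tendsto_atTop_of_lt_map hu (fun x hx => lt_reciprocalStep hab (hu0.trans_le hx))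
      (continuous_reciprocalStep a b).continuousOn
  refine tendsto_inv_natCast_smul_of_tendsto_succ_sub ?_
  simpa only [hu, Function.comp_def] using (tendsto_reciprocalStep_sub_self_atTop a b).comp hu_top

end Step

-- For `b < 0` the denominator of `acceleratedStep` can vanish, and `x / 0 = 0` then makes the
-- sequence stop at `0`.
theorem accelerated_stepsize_asymptotics_general
    (a b : ℝ) (hab : 0 < a + b) (γ : ℕ → ℝ) (hγ0 : 0 < γ 0)
    (hden : ∀ k, 0 < γ k → 1 + 2 * γ k * b ≠ 0)
    (hrec : ∀ k, γ (k + 1) = acceleratedStep a b (γ k)) :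
    (∀ k, 0 < γ k) ∧
    Tendsto (fun k : ℕ => (k : ℝ) * γ k) atTop (𝓝 (1 / (a + b))) ∧
    (∃ C : ℝ, ∀ k : ℕ, (k : ℝ) * γ k ≤ C) ∧
    Tendsto (fun k : ℕ => γ (k + 1) / γ k) atTop (𝓝 1) := by
  have hpos : ∀ k, 0 < γ k := by
    intro k
    induction k with
    | zero => exact hγ0
    | succ k ih => exact hrec k ▸ acceleratedStep_pos hab ih (hden k ih)
  have hinv : ∀ k, (γ (k + 1))⁻¹ = reciprocalStep a b (γ k)⁻¹ := fun k =>
    hrec k ▸ inv_acceleratedStep hab.le (hpos k) (hden k (hpos k))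
  have hlim : Tendsto (fun k : ℕ => (k : ℝ) * γ k) atTop (𝓝 (1 / (a + b))) := by
    have hrecip : Tendsto (fun k : ℕ => (k : ℝ)⁻¹ * (γ k)⁻¹) atTop (𝓝 (a + b)) :=
      tendsto_inv_natCast_mul_of_eq_reciprocalStep hab (inv_pos.2 hγ0) hinv
    simpa [mul_comm] using hrecip.inv₀ hab.ne'
  obtain ⟨C, hC⟩ := hlim.bddAbove_range
  exact ⟨hpos, hlim, ⟨C, fun k => hC ⟨k, rfl⟩⟩,
    tendsto_succ_div_of_tendsto_natCast_mul (one_div_pos.2 hab).ne' hlim⟩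

/-- Asymptotics of the accelerated stepsize sequence (equation (9) of the paper):
`k·γ_k → 1/(a+b)`, `γ_k = O(1/k)` (i.e. `k·γ_k` is bounded), and
`γ_{k+1}/γ_k → 1`; moreover each `γ_k` is positive. -/
theorem accelerated_stepsize_asymptotics
    (a b : ℝ) (ha : 0 ≤ a) (hb : 0 ≤ b) (hab : 0 < a + b)
    (γ : ℕ → ℝ) (hγ0 : 0 < γ 0)
    (hrec : ∀ k : ℕ, γ (k+1) =
      (-((γ k)^2 * a) + γ k * Real.sqrt ((γ k * a)^2 + 1 + 2 * γ k * b))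
        / (1 + 2 * γ k * b)) :
    (∀ k, 0 < γ k) ∧
    Tendsto (fun k : ℕ => (k : ℝ) * γ k) atTop (𝓝 (1 / (a + b))) ∧
    (∃ C : ℝ, ∀ k : ℕ, (k : ℝ) * γ k ≤ C) ∧
    Tendsto (fun k : ℕ => γ (k+1) / γ k) atTop (𝓝 1) := by
  exact accelerated_stepsize_asymptotics_general a b hab γ hγ0
    (fun k hk => by positivity) hrec
end

section
/- Proximity operator of a composition with an operator satisfying QQ* = ηI: Let 𝒵 and 𝒰 be finite-dimensional real inner product spaces, Q : 𝒵 → 𝒰 a continuous linear map with adjoint Q* satisfying Q∘Q* = η·I for some η > 0, and H : 𝒰 → ℝ a convex function. Then for every γ > 0 and every z ∈ 𝒵, the unique minimizer of y ↦ γ·H(Qy) + (1/2)‖y − z‖² is z + (1/η)·Q*(p − Qz), where p is the unique minimizer of v ↦ γη·H(v) + (1/2)‖v − Qz‖². (Via the Moreau identity this yields the formula prox_{H̃*/γ}(x,w) = (K*u, C*u) with u = prox_{H*/(γη)}((Kx+Cw)/η) used to derive the PD3O and PDDY algorithms, where Q(x,w) = Kx + Cw and KK* + CC* = ηI.) -/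
open Filter Topology RealInnerProductSpace

noncomputable section

/-!
Since `QQ* = ηI`, the point `z + (1/η)·Q*(p − Qz)` is the orthogonal projection of `z` onto the
fiber `{y | Q y = p}`, at squared distance `‖p − Qz‖² / η` from `z`. By Pythagoras, the objective
`γ·H(Qy) + ‖y − z‖²/2` is `1/η` times the objective of `prox_{γηH}(Qz)` at `Qy`, plus half the
squared distance from `y` to the projection of `z` onto the fiber through `y`. Minimizing it thus
amounts to minimizing the first term over the values of `Qy` and making the second one vanish.
-/

section Uniqueness

variable {E : Type*} [NormedAddCommGroup E] [InnerProductSpace ℝ E]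

theorem strongConvexOn_add_half_norm_sub_sq {s : Set E} {f : E → ℝ} (hf : ConvexOn ℝ s f) (z : E) :
    StrongConvexOn s 1 fun y => f y + ‖y - z‖ ^ 2 / 2 := by
  have sub_half_norm_sq_eq (y : E) :
      f y + ‖y - z‖ ^ 2 / 2 - 1 / 2 * ‖y‖ ^ 2 = f y + innerₗ E (-z) y + ‖z‖ ^ 2 / 2 := by
    rw [norm_sub_sq_real, innerₗ_apply_apply, inner_neg_left, real_inner_comm]
    ring
  simp only [strongConvexOn_iff_convex, sub_half_norm_sq_eq]
  exact (hf.add ((innerₗ E (-z)).convexOn hf.1)).add_const _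

theorem IsProxPt.eq_of_convexOn {σ : ℝ} (hσ : 0 ≤ σ) {G : E → ℝ} (hG : ConvexOn ℝ Set.univ G)
    {z p q : E} (hp : IsProxPt σ G z p) (hq : IsProxPt σ G z q) : p = q :=
  ((strongConvexOn_add_half_norm_sub_sq (hG.smul hσ) z).strictConvexOn one_pos).eq_of_isMinOn
    (fun y _ => hp y) (fun y _ => hq y) (Set.mem_univ p) (Set.mem_univ q)

end Uniqueness

section FiberProjection

open scoped InnerProduct

variable {𝒵 𝒰 : Type*}
  [NormedAddCommGroup 𝒵] [InnerProductSpace ℝ 𝒵] [CompleteSpace 𝒵]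
  [NormedAddCommGroup 𝒰] [InnerProductSpace ℝ 𝒰] [CompleteSpace 𝒰]
  {Q : 𝒵 →L[ℝ] 𝒰} {η : ℝ}

theorem apply_adjoint_of_comp_adjoint_eq_smul_id
    (hQ : Q ∘L Q† = η • ContinuousLinearMap.id ℝ 𝒰) (u : 𝒰) : Q ((Q†) u) = η • u := by
  simpa using congr($hQ u)

/-- The orthogonal projection of `z` onto the fiber `{y | Q y = p}`, in closed form: it is meant
for `Q` with `QQ* = ηI` and `η ≠ 0`, when `(1/η)·Q*` is the Moore–Penrose pseudoinverse of `Q`. -/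
def fiberProjection (Q : 𝒵 →L[ℝ] 𝒰) (η : ℝ) (z : 𝒵) (p : 𝒰) : 𝒵 :=
  z + (1 / η) • (Q†) (p - Q z)

theorem apply_fiberProjection (hη : η ≠ 0) (hQ : Q ∘L Q† = η • ContinuousLinearMap.id ℝ 𝒰)
    (z : 𝒵) (p : 𝒰) : Q (fiberProjection Q η z p) = p := by
  rw [fiberProjection, map_add, map_smul, apply_adjoint_of_comp_adjoint_eq_smul_id hQ, smul_smul,
    one_div_mul_cancel hη, one_smul, add_sub_cancel]

theorem inner_sub_fiberProjection_adjoint (hη : η ≠ 0)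
    (hQ : Q ∘L Q† = η • ContinuousLinearMap.id ℝ 𝒰) (z y : 𝒵) (u : 𝒰) :
    ⟪y - fiberProjection Q η z (Q y), (Q†) u⟫ = 0 := by
  rw [ContinuousLinearMap.adjoint_inner_right, map_sub, apply_fiberProjection hη hQ, sub_self,
    inner_zero_left]

theorem norm_fiberProjection_sub_sq (hη : η ≠ 0)
    (hQ : Q ∘L Q† = η • ContinuousLinearMap.id ℝ 𝒰) (z : 𝒵) (p : 𝒰) :
    ‖fiberProjection Q η z p - z‖ ^ 2 = ‖p - Q z‖ ^ 2 / η := by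
  have norm_adjoint_sq : ‖(Q†) (p - Q z)‖ ^ 2 = η * ‖p - Q z‖ ^ 2 := by
    rw [← real_inner_self_eq_norm_sq, ContinuousLinearMap.adjoint_inner_left,
      apply_adjoint_of_comp_adjoint_eq_smul_id hQ, real_inner_smul_right,
      real_inner_self_eq_norm_sq]
  rw [fiberProjection, add_sub_cancel_left, norm_smul, mul_pow, norm_adjoint_sq,
    Real.norm_eq_abs, sq_abs]
  field_simp

theorem norm_sub_sq_eq_add_norm_sub_fiberProjection_sq (hη : η ≠ 0)
    (hQ : Q ∘L Q† = η • ContinuousLinearMap.id ℝ 𝒰) (z y : 𝒵) :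
    ‖y - z‖ ^ 2 = ‖Q y - Q z‖ ^ 2 / η + ‖y - fiberProjection Q η z (Q y)‖ ^ 2 := by
  set w := fiberProjection Q η z (Q y) with hw
  have orthogonal : ⟪y - w, w - z⟫ = 0 := by
    have hwz : w - z = (Q†) ((1 / η) • (Q y - Q z)) := by
      rw [hw, fiberProjection, add_sub_cancel_left, map_smul]
    rw [hwz, inner_sub_fiberProjection_adjoint hη hQ]
  rw [← sub_add_sub_cancel y w z, norm_add_sq_real, orthogonal,
    norm_fiberProjection_sub_sq hη hQ]
  ring

theorem prox_objective_comp_eq_add (hη : η ≠ 0)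
    (hQ : Q ∘L Q† = η • ContinuousLinearMap.id ℝ 𝒰) (γ : ℝ) (H : 𝒰 → ℝ) (z y : 𝒵) :
    γ * H (Q y) + ‖y - z‖ ^ 2 / 2 =
      (γ * η * H (Q y) + ‖Q y - Q z‖ ^ 2 / 2) / η
        + ‖y - fiberProjection Q η z (Q y)‖ ^ 2 / 2 := by
  rw [norm_sub_sq_eq_add_norm_sub_fiberProjection_sq hη hQ]
  field_simp
  ring

theorem prox_objective_comp_fiberProjection (hη : η ≠ 0)
    (hQ : Q ∘L Q† = η • ContinuousLinearMap.id ℝ 𝒰) (γ : ℝ) (H : 𝒰 → ℝ) (z : 𝒵) (p : 𝒰) :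
    γ * H (Q (fiberProjection Q η z p)) + ‖fiberProjection Q η z p - z‖ ^ 2 / 2 =
      (γ * η * H p + ‖p - Q z‖ ^ 2 / 2) / η := by
  rw [apply_fiberProjection hη hQ, norm_fiberProjection_sub_sq hη hQ]
  field_simp

theorem IsProxPt.comp_fiberProjection (hη : 0 < η)
    (hQ : Q ∘L Q† = η • ContinuousLinearMap.id ℝ 𝒰) {γ : ℝ} {H : 𝒰 → ℝ} {z : 𝒵} {p : 𝒰}
    (hp : IsProxPt (γ * η) H (Q z) p) :
    IsProxPt γ (fun y => H (Q y)) z (fiberProjection Q η z p) := by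
  intro y
  rw [prox_objective_comp_fiberProjection hη.ne' hQ, prox_objective_comp_eq_add hη.ne' hQ γ H z y]
  exact le_add_of_le_of_nonneg ((div_le_div_iff_of_pos_right hη).2 (hp (Q y))) (by positivity)

theorem IsProxPt.eq_fiberProjection_of_comp (hη : η ≠ 0)
    (hQ : Q ∘L Q† = η • ContinuousLinearMap.id ℝ 𝒰) {γ : ℝ} {H : 𝒰 → ℝ} {z y : 𝒵}
    (hy : IsProxPt γ (fun y' => H (Q y')) z y) :
    y = fiberProjection Q η z (Q y) := by
  have h := hy (fiberProjection Q η z (Q y))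
  rw [prox_objective_comp_fiberProjection hη hQ, prox_objective_comp_eq_add hη hQ γ H z y] at h
  have hdist : ‖y - fiberProjection Q η z (Q y)‖ ^ 2 ≤ 0 := by linarith
  rwa [sq_nonpos_iff, norm_eq_zero, sub_eq_zero] at hdist

theorem IsProxPt.apply_of_comp (hη : 0 < η)
    (hQ : Q ∘L Q† = η • ContinuousLinearMap.id ℝ 𝒰) {γ : ℝ} {H : 𝒰 → ℝ} {z y : 𝒵}
    (hy : IsProxPt γ (fun y' => H (Q y')) z y) :
    IsProxPt (γ * η) H (Q z) (Q y) := by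
  intro v
  have h := hy (fiberProjection Q η z v)
  rw [hy.eq_fiberProjection_of_comp hη.ne' hQ] at h
  simp only [prox_objective_comp_fiberProjection hη.ne' hQ] at h
  exact (div_le_div_iff_of_pos_right hη).1 h

theorem prox_composition_of_row_orthogonal_general (hη : 0 < η)
    (hQ : Q ∘L Q† = η • ContinuousLinearMap.id ℝ 𝒰) (H : 𝒰 → ℝ) (γ : ℝ) (z y : 𝒵) :
    IsProxPt γ (fun y' => H (Q y')) z y ↔
      ∃ p, IsProxPt (γ * η) H (Q z) p ∧ y = z + (1 / η) • (Q†) (p - Q z) :=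
  ⟨fun hy => ⟨Q y, hy.apply_of_comp hη hQ, hy.eq_fiberProjection_of_comp hη.ne' hQ⟩,
    fun ⟨_, hp, hy⟩ => hy ▸ hp.comp_fiberProjection hη hQ⟩

end FiberProjection

/-- Proximity operator of `H ∘ Q` when `QQ* = ηI`:
`prox_{γ(H∘Q)}(z) = z + (1/η)·Q*(prox_{γηH}(Qz) − Qz)`. -/
theorem prox_composition_of_row_orthogonal
    {𝒵 𝒰 : Type*}
    [NormedAddCommGroup 𝒵] [InnerProductSpace ℝ 𝒵] [FiniteDimensional ℝ 𝒵]
    [NormedAddCommGroup 𝒰] [InnerProductSpace ℝ 𝒰] [FiniteDimensional ℝ 𝒰]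
    (Q : 𝒵 →L[ℝ] 𝒰) (η : ℝ) (hη : 0 < η)
    (hQ : Q.comp (ContinuousLinearMap.adjoint Q)
      = η • ContinuousLinearMap.id ℝ 𝒰)
    (H : 𝒰 → ℝ) (hH : ConvexOn ℝ Set.univ H)
    (γ : ℝ) (hγ : 0 < γ) (z : 𝒵) (p : 𝒰)
    (hp : IsProxPt (γ * η) H (Q z) p) :
    IsProxPt γ (fun y => H (Q y)) z
      (z + (1/η) • (ContinuousLinearMap.adjoint Q) (p - Q z)) ∧
    ∀ y, IsProxPt γ (fun y' => H (Q y')) z y →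
      y = z + (1/η) • (ContinuousLinearMap.adjoint Q) (p - Q z) := by
  refine ⟨(prox_composition_of_row_orthogonal_general hη hQ H γ z _).2 ⟨p, hp, rfl⟩, fun y hy => ?_⟩
  obtain ⟨q, hq, rfl⟩ := (prox_composition_of_row_orthogonal_general hη hQ H γ z y).1 hy
  rw [hq.eq_of_convexOn (by positivity) hH hp]
end
end

section
/- Closed form of the proximity operator of the hinge loss: Let a ∈ ℝ^d with a ≠ 0, b ∈ {−1, 1}, and define H : ℝ^d → ℝ by H(x) = max(1 − b·⟪a, x⟫, 0), and η₀ = ‖a‖². Then for every γ > 0 and every x ∈ ℝ^d, the unique minimizer of y ↦ γ·H(y) + (1/2)‖y − x‖² is x − (b/η₀)·max(min(b·⟪a, x⟫ − 1, 0), −η₀·γ)·a. -/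
open Filter Topology RealInnerProductSpace

noncomputable section

/-!
If `u ∈ ∂G(z - σ • u)`, the subgradient inequality and the expansion of the square show that the
prox objective at `z` exceeds its value at `z - σ • u` by at least half the squared distance, so
this point is the unique minimizer. The hinge loss is `max_{0 ≤ v ≤ 1} v (1 - ⟪b • a, y⟫)`, whose
subgradients are the `-v • b • a` with `v` attaining the maximum. Moving along `b • a` therefore
reduces the problem to a one-dimensional one, in which the clamp of `b⟪a, x⟫ - 1` to
`[-η₀γ, 0]`, divided by `-η₀γ`, is an optimal `v`.
-/

section Prox

variable {E : Type*} [NormedAddCommGroup E] [InnerProductSpace ℝ E]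

namespace IsSubgradientAt

theorem prox_objective_add_half_norm_sq_le {σ : ℝ} {G : E → ℝ} {z u : E}
    (hu : IsSubgradientAt G (z - σ • u) u) (hσ : 0 ≤ σ) (y : E) :
    σ * G (z - σ • u) + ‖z - σ • u - z‖ ^ 2 / 2 + ‖y - (z - σ • u)‖ ^ 2 / 2 ≤
      σ * G y + ‖y - z‖ ^ 2 / 2 := by
  set p := z - σ • u with hp
  have hsub : σ * (G p + ⟪u, y - p⟫) ≤ σ * G y := mul_le_mul_of_nonneg_left (hu y) hσ
  have hinner : ⟪y - p, p - z⟫ = -(σ * ⟪u, y - p⟫) := by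
    rw [show p - z = -(σ • u) by rw [hp]; abel, inner_neg_right, real_inner_smul_right,
      real_inner_comm]
  have hexpand := norm_add_sq_real (y - p) (p - z)
  rw [sub_add_sub_cancel, hinner] at hexpand
  linarith

theorem isProxPt_iff {σ : ℝ} {G : E → ℝ} {z u : E}
    (hu : IsSubgradientAt G (z - σ • u) u) (hσ : 0 ≤ σ) {y : E} :
    IsProxPt σ G z y ↔ y = z - σ • u := by
  have hgrowth := hu.prox_objective_add_half_norm_sq_le hσ
  constructor
  · intro hy
    have hdist : ‖y - (z - σ • u)‖ ^ 2 ≤ 0 := by linarith [hgrowth y, hy (z - σ • u)]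
    simpa [sub_eq_zero] using hdist.antisymm (sq_nonneg _)
  · rintro rfl w
    linarith [hgrowth w, sq_nonneg ‖w - (z - σ • u)‖]

theorem comp_inner {f : ℝ → ℝ} {a z : E} {u : ℝ} (hu : IsSubgradientAt f ⟪a, z⟫ u) :
    IsSubgradientAt (fun y ↦ f ⟪a, y⟫) z (u • a) := fun y ↦ by
  have h := hu ⟪a, y⟫
  rwa [← inner_sub_right, RCLike.inner_apply, conj_trivial, mul_comm, ← real_inner_smul_left] at h

end IsSubgradientAt

end Prox

section HingeLoss

/-- The hinge loss as a function of the margin `t = b⟪a, x⟫`. -/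
def hingeLoss (t : ℝ) : ℝ := max (1 - t) 0

/-- The displacement `s - prox_{σ · hingeLoss}(s)` of the one-dimensional prox step, written as the
clamp of `s - 1` to `[-σ, 0]` (for `0 ≤ σ`). -/
def hingeStep (σ s : ℝ) : ℝ := max (min (s - 1) 0) (-σ)

theorem neg_le_hingeStep (σ s : ℝ) : -σ ≤ hingeStep σ s := le_max_right _ _

theorem hingeStep_nonpos {σ : ℝ} (hσ : 0 ≤ σ) (s : ℝ) : hingeStep σ s ≤ 0 :=
  max_le (min_le_right _ _) (neg_nonpos.2 hσ)

theorem mul_hingeLoss_sub_hingeStep {σ : ℝ} (hσ : 0 ≤ σ) (s : ℝ) :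
    σ * hingeLoss (s - hingeStep σ s) = -hingeStep σ s * (1 - (s - hingeStep σ s)) := by
  obtain hs | hs | hs : 1 ≤ s ∨ (1 - σ ≤ s ∧ s ≤ 1) ∨ s ≤ 1 - σ := by grind
  · have hstep : hingeStep σ s = 0 := by grind [hingeStep]
    have hloss : hingeLoss s = 0 := max_eq_right (by linarith)
    simp [hstep, hloss]
  · have hstep : hingeStep σ s = s - 1 := by grind [hingeStep]
    simp [hstep, hingeLoss]
  · have hstep : hingeStep σ s = -σ := by grind [hingeStep]
    have hloss : hingeLoss (s + σ) = 1 - (s + σ) := max_eq_left (by linarith)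
    simp [hstep, hloss]

theorem isSubgradientAt_hingeLoss {q u : ℝ} (hu : -1 ≤ u) (hu' : u ≤ 0)
    (hq : hingeLoss q = -u * (1 - q)) : IsSubgradientAt hingeLoss q u := fun t ↦ by
  have hnonneg : 0 ≤ hingeLoss t := le_max_right _ _
  calc
    hingeLoss q + ⟪u, t - q⟫ = -u * (1 - t) := by rw [hq, RCLike.inner_apply, conj_trivial]; ring
    _ ≤ -u * hingeLoss t := mul_le_mul_of_nonneg_left (le_max_left _ _) (by linarith)
    _ ≤ hingeLoss t := mul_le_of_le_one_left hnonneg (by linarith)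

theorem isSubgradientAt_hingeLoss_sub_hingeStep {σ : ℝ} (hσ : 0 < σ) (s : ℝ) :
    IsSubgradientAt hingeLoss (s - hingeStep σ s) (hingeStep σ s / σ) := by
  apply isSubgradientAt_hingeLoss
  · rw [le_div_iff₀ hσ, neg_one_mul]
    exact neg_le_hingeStep σ s
  · exact div_nonpos_of_nonpos_of_nonneg (hingeStep_nonpos hσ.le s) hσ.le
  · have h := mul_hingeLoss_sub_hingeStep hσ.le s
    field_simp
    linarith

end HingeLoss

theorem prox_hinge_loss_general {E : Type*} [NormedAddCommGroup E] [InnerProductSpace ℝ E]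
    {a : E} (ha : a ≠ 0) {b : ℝ} (hb : b ≠ 0) {H : E → ℝ}
    (hH : ∀ x, H x = max (1 - b * ⟪a, x⟫) 0) {η₀ : ℝ} (hη₀ : η₀ = ‖b • a‖ ^ 2)
    {γ : ℝ} (hγ : 0 < γ) (x y : E) :
    IsProxPt γ H x y ↔
      y = x - ((b / η₀) * max (min (b * ⟪a, x⟫ - 1) 0) (-(η₀ * γ))) • a := by
  have hη₀_pos : 0 < η₀ := hη₀ ▸ pow_pos (norm_pos_iff.2 (smul_ne_zero hb ha)) 2
  have hH_eq : H = fun z ↦ hingeLoss ⟪b • a, z⟫ :=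
    funext fun z ↦ by rw [hH, real_inner_smul_left, hingeLoss]
  set m := hingeStep (η₀ * γ) ⟪b • a, x⟫ with hm
  set u := (m / (η₀ * γ)) • b • a with hu
  have hmargin : ⟪b • a, x - γ • u⟫ = ⟪b • a, x⟫ - m := by
    rw [inner_sub_right, hu, real_inner_smul_right, real_inner_smul_right,
      real_inner_self_eq_norm_sq, ← hη₀]
    field_simp
  have hsub : IsSubgradientAt H (x - γ • u) u := by
    rw [hH_eq]
    apply IsSubgradientAt.comp_inner
    rw [hmargin]
    exact isSubgradientAt_hingeLoss_sub_hingeStep (mul_pos hη₀_pos hγ) _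
  have hdisp : γ • u = ((b / η₀) * m) • a := by
    rw [hu, smul_smul, smul_smul]
    congr 1
    field_simp
  rw [hsub.isProxPt_iff hγ.le, hdisp, hm, hingeStep, real_inner_smul_left]

/-- Closed form of the proximity operator of the hinge loss
`H(x) = max(1 − b⟪a, x⟫, 0)`. -/
theorem prox_hinge_loss
    {d : ℕ} (a : EuclideanSpace ℝ (Fin d)) (ha : a ≠ 0)
    (b : ℝ) (hb : b = 1 ∨ b = -1)
    (H : EuclideanSpace ℝ (Fin d) → ℝ)
    (hH : ∀ x, H x = max (1 - b * ⟪a, x⟫) 0)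
    (η₀ : ℝ) (hη₀ : η₀ = ‖a‖ ^ 2)
    (γ : ℝ) (hγ : 0 < γ) (x : EuclideanSpace ℝ (Fin d)) :
    IsProxPt γ H x
      (x - ((b / η₀) * max (min (b * ⟪a, x⟫ - 1) 0) (-(η₀ * γ))) • a) ∧
    ∀ y, IsProxPt γ H x y →
      y = x - ((b / η₀) * max (min (b * ⟪a, x⟫ - 1) 0) (-(η₀ * γ))) • a := by
  have hprox := prox_hinge_loss_general ha (b := b) (by grind) hH (η₀ := η₀)
    (by rcases hb with rfl | rfl <;> simp [hη₀]) hγ x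
  exact ⟨(hprox _).2 rfl, fun y ↦ (hprox y).1⟩
end
end

section
/- Proximity operator of the conjugate of the Huber function: Let λ > 0 and ν > 0, and define the Huber function h : ℝ → ℝ by h(t) = (λ/(2ν))·t² if |t| ≤ ν and h(t) = λ·(|t| − ν/2) otherwise. Then for every γ > 0 and every t ∈ ℝ, prox_{h*/γ}(t) = t / max(|t|/λ, 1 + ν/(λγ)). Equivalently (via the Moreau identity prox_{h*/γ}(t) = t − (1/γ)·prox_{γh}(γt)): the unique minimizer p of y ↦ γ·h(y) + (1/2)(y − γt)² satisfies t − p/γ = t / max(|t|/λ, 1 + ν/(λγ)). -/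
open Filter Topology

/-! The vector `(lam / max ‖x‖ ν) • x` attains equality in the Fenchel–Young inequality
`⟪s, x⟫ ≤ h x + ν / (2 * lam) * ‖s‖ ^ 2` of the Huber function `h`, valid for `‖s‖ ≤ lam`, so it
is a subgradient of `h` at `x`. If `s` is a subgradient of `h` at `γ • (t - s)`, then, the
proximal objective being strongly convex, this point is its unique minimizer. For `s = M⁻¹ • t`
with `M = max (‖t‖ / lam) (1 + ν / (lam * γ))` this condition amounts to
`max ‖γ • (t - s)‖ ν = lam * γ * (M - 1)`. -/

section Definitions

variable {E : Type*}

/-- The Huber function on a normed space, the smoothing of `lam * ‖·‖` at scale `ν`. -/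
noncomputable def huber [Norm E] (lam ν : ℝ) (x : E) : ℝ :=
  if ‖x‖ ≤ ν then lam / (2 * ν) * ‖x‖ ^ 2 else lam * (‖x‖ - ν / 2)

/-- The denominator in `prox_{h*/γ}(t) = t / max(‖t‖/λ, 1 + ν/(λγ))` for the Huber function `h`. -/
noncomputable def huberDualScale [Norm E] (lam ν γ : ℝ) (t : E) : ℝ :=
  max (‖t‖ / lam) (1 + ν / (lam * γ))

/-- `u` is a subgradient of `f` at `x`, in the global sense of convex analysis. -/
def HasSubgradientAt [SeminormedAddCommGroup E] [InnerProductSpace ℝ E]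
    (f : E → ℝ) (u x : E) : Prop :=
  ∀ y, f x + inner ℝ u (y - x) ≤ f y

/-- `p` is a proximal point `prox_{γf}(w)`; a predicate, since for general `f` such a point need
neither exist nor be unique. -/
def IsProx [SeminormedAddCommGroup E] (f : E → ℝ) (γ : ℝ) (w p : E) : Prop :=
  ∀ y, γ * f p + ‖p - w‖ ^ 2 / 2 ≤ γ * f y + ‖y - w‖ ^ 2 / 2

end Definitions

namespace HasSubgradientAt

theorem prox_quadratic_growth {E : Type*} [SeminormedAddCommGroup E] [InnerProductSpace ℝ E]
    {f : E → ℝ} {u x : E} {γ : ℝ} (hu : HasSubgradientAt f u x) (hγ : 0 ≤ γ) (y : E) :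
    γ * f x + ‖x - (x + γ • u)‖ ^ 2 / 2 + ‖y - x‖ ^ 2 / 2
      ≤ γ * f y + ‖y - (x + γ • u)‖ ^ 2 / 2 := by
  have expand : ‖y - (x + γ • u)‖ ^ 2
      = ‖y - x‖ ^ 2 - 2 * (γ * inner ℝ u (y - x)) + ‖x - (x + γ • u)‖ ^ 2 := by
    rw [← sub_sub, norm_sub_sq_real, real_inner_smul_right, real_inner_comm, sub_add_cancel_left,
      norm_neg]
  have scaled := mul_le_mul_of_nonneg_left (hu y) hγ
  linarith

variable {E : Type*} [NormedAddCommGroup E] [InnerProductSpace ℝ E]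
  {f : E → ℝ} {u x p t : E} {γ : ℝ}

theorem isProx_iff_eq (hu : HasSubgradientAt f u x) (hγ : 0 ≤ γ) :
    IsProx f γ (x + γ • u) p ↔ p = x := by
  refine ⟨fun hp ↦ ?_, ?_⟩
  · have dist_sq_nonpos : ‖p - x‖ ^ 2 ≤ 0 := by
      linarith [hp x, hu.prox_quadratic_growth hγ p]
    rwa [sq_nonpos_iff, norm_sub_eq_zero_iff] at dist_sq_nonpos
  · rintro rfl y
    linarith [hu.prox_quadratic_growth hγ y, sq_nonneg ‖y - p‖]

theorem isProx_smul_iff_sub_inv_smul_eq (hu : HasSubgradientAt f u (γ • (t - u))) (hγ : 0 < γ) :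
    IsProx f γ (γ • t) p ↔ t - γ⁻¹ • p = u := by
  have base : γ • (t - u) + γ • u = γ • t := by rw [← smul_add, sub_add_cancel]
  rw [← base, hu.isProx_iff_eq hγ.le, ← inv_smul_eq_iff₀ hγ.ne', eq_sub_iff_add_eq,
    sub_eq_iff_eq_add', eq_comm]

end HasSubgradientAt

theorem one_lt_huberDualScale {E : Type*} [Norm E] {lam ν γ : ℝ}
    (hlam : 0 < lam) (hν : 0 < ν) (hγ : 0 < γ) (t : E) :
    1 < huberDualScale lam ν γ t :=
  lt_max_of_lt_right (lt_add_of_pos_right 1 (by positivity))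

section NormedSpace

variable {E : Type*} [SeminormedAddCommGroup E] [NormedSpace ℝ E] {lam γ : ℝ}

theorem norm_div_max_smul_le (hlam : 0 ≤ lam) (ν : ℝ) (x : E) :
    ‖(lam / max ‖x‖ ν) • x‖ ≤ lam := by
  have hmax : 0 ≤ max ‖x‖ ν := le_max_of_le_left (norm_nonneg x)
  rw [norm_smul, Real.norm_of_nonneg (div_nonneg hlam hmax), div_mul_eq_mul_div]
  exact div_le_of_le_mul₀ hmax hlam (mul_le_mul_of_nonneg_left (le_max_left _ _) hlam)

theorem norm_smul_sub_inv_smul {M : ℝ} (hγ : 0 ≤ γ) (hM : 1 ≤ M) (t : E) :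
    ‖γ • (t - M⁻¹ • t)‖ = γ * (M - 1) * (‖t‖ / M) := by
  have factor : γ • (t - M⁻¹ • t) = (γ * (M - 1) / M) • t := by
    match_scalars
    field
  have coeff_nonneg : 0 ≤ γ * (M - 1) / M := by
    have := sub_nonneg.mpr hM
    positivity
  rw [factor, norm_smul, Real.norm_of_nonneg coeff_nonneg]
  ring

theorem max_norm_smul_sub_inv_huberDualScale_smul
    {ν : ℝ} (hlam : 0 < lam) (hν : 0 < ν) (hγ : 0 < γ) (t : E) :
    max ‖γ • (t - (huberDualScale lam ν γ t)⁻¹ • t)‖ ν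
      = lam * γ * (huberDualScale lam ν γ t - 1) := by
  have hM := one_lt_huberDualScale hlam hν hγ t
  have M_eq : huberDualScale lam ν γ t = max (‖t‖ / lam) (1 + ν / (lam * γ)) := rfl
  generalize huberDualScale lam ν γ t = M at hM M_eq
  rcases le_total (‖t‖ / lam) (1 + ν / (lam * γ)) with quadratic | linear
  · rw [max_eq_right quadratic] at M_eq
    have scale_eq : lam * γ * (M - 1) = ν := by
      rw [M_eq]
      field
    have dual_norm_le : ‖t‖ / M ≤ lam := by
      rwa [← M_eq, div_le_comm₀ hlam (by positivity)] at quadratic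
    rw [norm_smul_sub_inv_smul hγ.le hM.le, scale_eq, max_eq_right]
    calc γ * (M - 1) * (‖t‖ / M) ≤ γ * (M - 1) * lam :=
          mul_le_mul_of_nonneg_left dual_norm_le (by have := sub_pos.mpr hM; positivity)
      _ = ν := by rw [← scale_eq]; ring
  · rw [max_eq_left linear] at M_eq
    have dual_norm_eq : ‖t‖ / M = lam := by
      rw [(div_eq_iff hlam.ne').mp M_eq.symm]
      field
    have scale_ge : ν ≤ lam * γ * (M - 1) := by
      rwa [← M_eq, ← le_sub_iff_add_le', div_le_iff₀' (by positivity)] at linear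
    rw [norm_smul_sub_inv_smul hγ.le hM.le, dual_norm_eq, mul_comm _ lam, ← mul_assoc,
      max_eq_left scale_ge]

end NormedSpace

section InnerProductSpace

variable {E : Type*} [SeminormedAddCommGroup E] [InnerProductSpace ℝ E] {lam ν γ : ℝ}

theorem inner_le_huber_add (hlam : 0 < lam) (hν : 0 < ν) {s : E} (hs : ‖s‖ ≤ lam) (x : E) :
    inner ℝ s x ≤ huber lam ν x + ν / (2 * lam) * ‖s‖ ^ 2 := by
  refine (real_inner_le_norm s x).trans (sub_nonneg.mp ?_)
  rw [huber]
  split_ifs with hx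
  · have complete_square : lam / (2 * ν) * ‖x‖ ^ 2 + ν / (2 * lam) * ‖s‖ ^ 2 - ‖s‖ * ‖x‖
        = (lam * ‖x‖ - ν * ‖s‖) ^ 2 / (2 * lam * ν) := by
      field
    rw [complete_square]
    positivity
  · have factor_gap : lam * (‖x‖ - ν / 2) + ν / (2 * lam) * ‖s‖ ^ 2 - ‖s‖ * ‖x‖
        = (lam - ‖s‖) * (‖x‖ - ν) + ν * (lam - ‖s‖) ^ 2 / (2 * lam) := by
      field
    rw [factor_gap]
    have := mul_nonneg (sub_nonneg.mpr hs) (sub_nonneg.mpr (not_le.mp hx).le)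
    positivity

theorem inner_div_max_smul_eq_huber_add (hlam : 0 < lam) (hν : 0 < ν) (x : E) :
    inner ℝ ((lam / max ‖x‖ ν) • x) x
      = huber lam ν x + ν / (2 * lam) * ‖(lam / max ‖x‖ ν) • x‖ ^ 2 := by
  rw [real_inner_smul_left, real_inner_self_eq_norm_sq, norm_smul, mul_pow, Real.norm_eq_abs,
    sq_abs, huber]
  split_ifs with hx
  · rw [max_eq_right hx]
    field
  · have hνx : ν < ‖x‖ := not_le.mp hx
    have hx_pos : 0 < ‖x‖ := hν.trans hνx
    rw [max_eq_left hνx.le]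
    field

theorem hasSubgradientAt_huber (hlam : 0 < lam) (hν : 0 < ν) (x : E) :
    HasSubgradientAt (huber lam ν) ((lam / max ‖x‖ ν) • x) x := by
  intro y
  have inequality := inner_le_huber_add hlam hν (norm_div_max_smul_le hlam.le ν x) y
  have equality := inner_div_max_smul_eq_huber_add hlam hν x
  rw [inner_sub_right]
  linarith

theorem hasSubgradientAt_huber_inv_huberDualScale_smul
    (hlam : 0 < lam) (hν : 0 < ν) (hγ : 0 < γ) (t : E) :
    HasSubgradientAt (huber lam ν) ((huberDualScale lam ν γ t)⁻¹ • t)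
      (γ • (t - (huberDualScale lam ν γ t)⁻¹ • t)) := by
  have hM := one_lt_huberDualScale hlam hν hγ t
  convert hasSubgradientAt_huber hlam hν (γ • (t - (huberDualScale lam ν γ t)⁻¹ • t)) using 1
  rw [max_norm_smul_sub_inv_huberDualScale_smul hlam hν hγ]
  have : huberDualScale lam ν γ t - 1 ≠ 0 := (sub_pos.mpr hM).ne'
  match_scalars
  field

end InnerProductSpace

theorem prox_huber_conjugate_general {E : Type*} [NormedAddCommGroup E] [InnerProductSpace ℝ E]
    {lam ν γ : ℝ} (hlam : 0 < lam) (hν : 0 < ν) (hγ : 0 < γ) (t p : E) :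
    IsProx (huber lam ν) γ (γ • t) p
      ↔ t - γ⁻¹ • p = (max (‖t‖ / lam) (1 + ν / (lam * γ)))⁻¹ • t :=
  (hasSubgradientAt_huber_inv_huberDualScale_smul hlam hν hγ t).isProx_smul_iff_sub_inv_smul_eq hγ

/-- Proximity operator of the conjugate of the Huber function: with
`h(t) = (λ/(2ν))t²` for `|t| ≤ ν` and `λ(|t| − ν/2)` otherwise, for every
`γ > 0` and `t ∈ ℝ`, the minimizer `p` of `y ↦ γh(y) + (1/2)(y − γt)²`
satisfies `t − p/γ = t / max(|t|/λ, 1 + ν/(λγ))`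
(i.e. `prox_{h*/γ}(t) = t / max(|t|/λ, 1 + ν/(λγ))` via the Moreau identity). -/
theorem prox_huber_conjugate
    (lam ν : ℝ) (hlam : 0 < lam) (hν : 0 < ν)
    (h : ℝ → ℝ)
    (hh : ∀ t, h t = if |t| ≤ ν then lam / (2 * ν) * t ^ 2
      else lam * (|t| - ν / 2))
    (γ : ℝ) (hγ : 0 < γ) (t : ℝ) (p : ℝ)
    (hp : ∀ y : ℝ, γ * h p + (p - γ * t) ^ 2 / 2 ≤ γ * h y + (y - γ * t) ^ 2 / 2) :
    t - p / γ = t / max (|t| / lam) (1 + ν / (lam * γ)) := by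
  obtain rfl : h = huber lam ν := funext fun x ↦ by simp [hh, huber]
  simpa [div_eq_inv_mul] using
    (prox_huber_conjugate_general hlam hν hγ t p).mp (by simpa [IsProx] using hp)
end
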